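/- Let n ≥ 2 and let C ⊂ ℝⁿ be an irrational simplicial cone with Klein polyhedron K and sail Π. Let v be a vertex of Π contained in exactly m edges of K (in particular, in only finitely many edges), with primitive integer direction vectors r₁,…,r_m, and let F be an (n−1)-dimensional face of K with v ∈ F. Then the subgroup of ℤⁿ generated by ℤⁿ ∩ aff(F) has finite index ρ(F,0) in ℤⁿ, and ρ(F,0) < (n · det oSt_v)^{8·n!}. -/

import Mathlib

open Set Function

noncomputable section

/-- Points of `ℝⁿ`. -/
abbrev Vec (n : ℕ) := Fin n → ℝ

/-- A point of `ℝⁿ` with all coordinates integer, i.e. a point of `ℤⁿ`. -/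
def IsIntVec {n : ℕ} (x : Vec n) : Prop := ∀ i, ∃ m : ℤ, x i = (m : ℝ)

/-- The canonical embedding of `ℤⁿ` into `ℝⁿ`. -/
def intCast {n : ℕ} (y : Fin n → ℤ) : Vec n := fun i => (y i : ℝ)

/-- The standard inner product on `ℝⁿ`. -/
def dot {n : ℕ} (x y : Vec n) : ℝ := ∑ i, x i * y i

/-- An integer vector is primitive if the gcd of its coordinates is `1`, i.e. every common
divisor of the coordinates is a unit. -/
def IsPrimitiveVec {n : ℕ} (r : Fin n → ℤ) : Prop :=
  ∀ d : ℤ, (∀ i, d ∣ r i) → IsUnit d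

/-- `E` is a face of `K` of dimension `d`: a convex extreme subset of `K`
whose affine hull has dimension `d`. -/
def IsFaceDim {n : ℕ} (K E : Set (Vec n)) (d : ℕ) : Prop :=
  IsExtreme ℝ K E ∧ Convex ℝ E ∧ Module.finrank ℝ (affineSpan ℝ E).direction = d

/-- The vertex `v` of `P` is contained in exactly the `m` (pairwise distinct) edges
`E 0, …, E (m-1)` of `P`, and `r j` is the primitive integer direction vector of `E j`
emanating from `v`. -/
def HasEdgeData {n m : ℕ} (P : Set (Vec n)) (v : Vec n)
    (E : Fin m → Set (Vec n)) (r : Fin m → (Fin n → ℤ)) : Prop :=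
  Function.Injective E ∧
  (∀ j, IsFaceDim P (E j) 1 ∧ v ∈ E j ∧ IsPrimitiveVec (r j) ∧
    E j ⊆ {x | ∃ t : ℝ, 0 ≤ t ∧ x = v + t • intCast (r j)}) ∧
  (∀ F, IsFaceDim P F 1 → v ∈ F → ∃ j, F = E j)

open Classical in
/-- The determinant of the edge star of a vertex with primitive edge direction vectors
`r 0, …, r (m-1)`:  `∑_{1 ≤ i₁ < … < iₙ ≤ m} |det (r i₁, …, r iₙ)|`. -/
def starDet {n m : ℕ} (r : Fin m → (Fin n → ℤ)) : ℤ :=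
  ∑ g ∈ Finset.univ.filter (fun g : Fin n → Fin m => StrictMono g),
    |(Matrix.of fun i j => r (g i) j).det|

/-!
By irrationality a vertex `v` of the Klein polyhedron `K` is an interior point of `C`. The integer
points `u` close to a given ray of `closure C` satisfy `v + u ∈ C`, and the ray lies in the cone
generated by them; hence `closure C` is contained in the cone `T` of feasible directions of `K` at
`v`. As `T` is salient and the directions from `v` to the integer points of `C` accumulate only in
`closure C`, the cone `T` is generated by its extreme rays, that is, by the edge directions `r j`.

In particular `v` is a nonnegative combination `∑ c i • r (σ i)` of linearly independent edge
directions. If some `c i` were at least `(4n) ^ (2 n! - 1)`, simultaneous approximation would yield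
`0 < s < 1` for which `u = ∑ ⌊s c i⌋ • r (σ i)` is nonzero and `v - u` is a nonzero integer point of
`C`. Both `u` and `-u` would then lie in `T`, contradicting salience.

Finally, the direction of a facet `F` at `v` is spanned by edge directions
`r (ρ 1), …, r (ρ (n - 1))`. The form `det (·, r (ρ 1), …, r (ρ (n - 1)))` is constant on `aff F`,
so `ρ(F, 0)` divides its nonzero value at `v`, and expanding `v` in edge directions bounds this
value by `n (4n) ^ (2 n! - 1) det oSt_v`.
-/

open scoped Topology

section DiophantineApproximation

variable {ι : Type*} [Fintype ι]

lemma exists_nat_forall_abs_mul_sub_round_le (x : ι → ℝ) {Q : ℕ} (hQ : 0 < Q) :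
    ∃ q : ℕ, 0 < q ∧ q ≤ Q ^ Fintype.card ι ∧ ∀ i, |q * x i - round (q * x i)| ≤ 1 / Q := by
  classical
  have hQ' : (0 : ℝ) < Q := by exact_mod_cast hQ
  let box (k : ℕ) (i : ι) : ℤ := ⌊Int.fract (k * x i) * Q⌋
  have hbox : ∀ k ∈ Finset.range (Q ^ Fintype.card ι + 1),
      box k ∈ Fintype.piFinset fun _ : ι => Finset.Ico 0 (Q : ℤ) := by
    refine fun k _ => Fintype.mem_piFinset.2 fun i => Finset.mem_Ico.2
      ⟨Int.floor_nonneg.2 (by positivity), Int.floor_lt.2 ?_⟩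
    simpa using mul_lt_mul_of_pos_right (Int.fract_lt_one (k * x i)) hQ'
  obtain ⟨a, ha, b, hb, hne, hab⟩ :=
    Finset.exists_ne_map_eq_of_card_lt_of_maps_to (by simp) hbox
  wlog hlt : a < b generalizing a b
  · exact this b hb a ha hne.symm hab.symm (lt_of_le_of_ne (not_lt.1 hlt) hne.symm)
  refine ⟨b - a, Nat.sub_pos_of_lt hlt, ?_, fun i => ?_⟩
  · have := Finset.mem_range.1 hb
    lia
  · refine (round_le _ (⌊b * x i⌋ - ⌊a * x i⌋)).trans ?_
    have hclose : |Int.fract (b * x i) * Q - Int.fract (a * x i) * Q| < 1 :=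
      Int.abs_sub_lt_one_of_floor_eq_floor (congrFun hab i).symm
    rw [← sub_mul, abs_mul, abs_of_pos hQ', ← lt_div_iff₀ hQ'] at hclose
    convert! hclose.le using 2
    push_cast [Nat.cast_sub hlt.le]
    simp only [Int.fract]
    ring

lemma exists_lt_subset_succ_of_monotone {α : Type*} {G : ℕ → Finset α} (hG : Monotone G)
    {n : ℕ} (hn : (G n).card < n) : ∃ p < n, G (p + 1) ⊆ G p ∧ (G (p + 1)).card ≤ p := by
  induction n with
  | zero => exact absurd hn (Nat.not_lt_zero _)
  | succ n ih =>
    by_cases hcard : (G n).card < n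
    · obtain ⟨p, hp, h⟩ := ih hcard
      exact ⟨p, hp.trans n.lt_succ_self, h⟩
    · exact ⟨n, n.lt_succ_self,
        (Finset.eq_of_subset_of_card_le (hG n.le_succ) (by lia)).ge, Nat.lt_succ_iff.1 hn⟩

lemma fract_le_of_nonneg_of_le {y δ : ℝ} (h0 : 0 ≤ y) (h : y ≤ δ) : Int.fract y ≤ δ := by
  have : (0 : ℝ) ≤ ⌊y⌋ := by exact_mod_cast Int.floor_nonneg.2 h0
  have := Int.self_sub_floor y
  linarith

lemma fract_add_inv_mul_le_of_abs_mul_sub_round_le {q A x : ℝ} (hA : 0 < A) (hx : x ≤ 1)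
    (h : |q * x - round (q * x)| ≤ x / A) : Int.fract ((q + 1 / A) * x) ≤ 2 / A := by
  have hxA : x / A ≤ 1 / A := by gcongr
  have hround := abs_le.1 h
  rw [← Int.fract_sub_intCast _ (round (q * x))]
  refine fract_le_of_nonneg_of_le ?_ ?_ <;> ring_nf at hround hxA ⊢ <;> linarith

lemma exists_lt_finset_forall_one_le_pow_mul {n : ℕ} {A : ℝ} (hA : 1 ≤ A)
    (hn : Fintype.card ι < n) {x : ι → ℝ} (hx : ∀ i, 0 ≤ x i) :
    ∃ p < n, ∃ S : Finset ι, S.card ≤ p ∧ (∀ i ∈ S, 1 ≤ A ^ (2 * p.factorial - 1) * x i) ∧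
      ∀ i ∉ S, A ^ (2 * (p + 1).factorial - 1) * x i < 1 := by
  classical
  let G (p : ℕ) : Finset ι := {i | 1 ≤ A ^ (2 * p.factorial - 1) * x i}
  have hG : Monotone G := fun p p' hp i hi => by
    simp only [G, Finset.mem_filter_univ] at hi ⊢
    refine hi.trans (mul_le_mul_of_nonneg_right (pow_le_pow_right₀ hA ?_) (hx i))
    have := Nat.factorial_le hp
    lia
  obtain ⟨p, hpn, hsub, hcard⟩ :=
    exists_lt_subset_succ_of_monotone hG ((Finset.card_le_univ (G n)).trans_lt hn)
  exact ⟨p, hpn, G (p + 1), hcard, fun i hi => (Finset.mem_filter.1 (hsub hi)).2,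
    fun i hi => by simpa [G] using hi⟩

/- No `x i` lies between the scales `A ^ (1 - 2 (p + 1)!)` and `A ^ (1 - 2 p!)`. The `x i` above
them are few enough to be approximated simultaneously with a small `q`, and those below stay small
after multiplication by `q`. -/
lemma exists_nat_forall_fract_add_inv_mul_le {n A : ℕ} (hA : 0 < A) (hn : Fintype.card ι < n)
    {x : ι → ℝ} (hx0 : ∀ i, 0 ≤ x i) (hx1 : ∀ i, x i ≤ 1) :
    ∃ q : ℕ, 0 < q ∧ A * q ≤ A ^ (2 * n.factorial - 1) ∧
      ∀ i, Int.fract ((q + 1 / A) * x i) ≤ 2 / A := by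
  have hA0 : (0 : ℝ) < A := by exact_mod_cast hA
  obtain ⟨p, hpn, S, hcard, hlarge, hsmall⟩ := exists_lt_finset_forall_one_le_pow_mul
    (by exact_mod_cast hA : (1 : ℝ) ≤ A) hn hx0
  obtain ⟨q, hq0, hq, happrox⟩ := exists_nat_forall_abs_mul_sub_round_le
    (fun i : S => x i) (pow_pos hA (2 * p.factorial))
  have hp1 : 1 ≤ p.factorial := p.factorial_pos
  have hAq : A * q ≤ A ^ (2 * (p.factorial * p) + 1) := by
    rw [pow_succ', mul_le_mul_iff_right₀ hA]
    refine hq.trans ?_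
    rw [← pow_mul, ← mul_assoc]
    exact Nat.pow_le_pow_right hA (Nat.mul_le_mul_left _ (by simpa using hcard))
  have hexp : 2 * (p.factorial * p) + 1 ≤ 2 * (p + 1).factorial - 1 := by
    rw [Nat.factorial_succ]
    lia
  refine ⟨q, hq0, hAq.trans (Nat.pow_le_pow_right hA ?_), fun i => ?_⟩
  · have := Nat.factorial_le hpn
    lia
  by_cases hi : i ∈ S
  · have hqi := happrox ⟨i, hi⟩
    have hlarge_i := hlarge i hi
    have herr : 1 / ((A ^ (2 * p.factorial) : ℕ) : ℝ) ≤ x i / A := by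
      rw [div_le_div_iff₀ (by positivity) hA0, Nat.cast_pow,
        ← pow_sub_one_mul (by lia : 2 * p.factorial ≠ 0)]
      nlinarith
    exact fract_add_inv_mul_le_of_abs_mul_sub_round_le hA0 (hx1 i) (hqi.trans herr)
  · refine fract_le_of_nonneg_of_le (mul_nonneg (by positivity) (hx0 i)) ?_
    have hAqR : (A * q : ℝ) ≤ A ^ (2 * (p + 1).factorial - 1) := by
      exact_mod_cast hAq.trans (Nat.pow_le_pow_right hA hexp)
    have hq1 : (1 : ℝ) ≤ A * q := by exact_mod_cast Nat.mul_pos hA hq0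
    rw [le_div_iff₀ hA0]
    calc (q + 1 / A) * x i * A = (A * q + 1) * x i := by field_simp
      _ ≤ 2 * (A ^ (2 * (p + 1).factorial - 1) * x i) := by nlinarith [hx0 i]
      _ ≤ 2 := by linarith [hsmall i hi]

lemma exists_scale_sum_fract_le {n : ℕ} (hn : Fintype.card ι ≤ n) {c : ι → ℝ} (hc : ∀ i, 0 ≤ c i)
    {i₀ : ι} (hmax : ∀ i, c i ≤ c i₀) (hbig : (4 * n : ℝ) ^ (2 * n.factorial - 1) ≤ c i₀) :
    ∃ s, 0 < s ∧ s < 1 ∧ 1 ≤ s * c i₀ ∧ ∑ i, Int.fract (s * c i) ≤ 1 - s := by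
  classical
  have hn0 : 0 < n := (Fintype.card_pos_iff.2 ⟨i₀⟩).trans_le hn
  have hn1 : (1 : ℝ) ≤ n := by exact_mod_cast hn0
  have hc1 : 1 ≤ c i₀ := (one_le_pow₀ (by linarith)).trans hbig
  have hcard : Fintype.card {i // i ≠ i₀} = Fintype.card ι - 1 := by simp
  obtain ⟨q, hq0, hq, hfract⟩ := exists_nat_forall_fract_add_inv_mul_le (A := 4 * n) (by lia)
    (by lia : Fintype.card {i // i ≠ i₀} < n) (x := fun i => c i / c i₀)
    (fun i => div_nonneg (hc i) (hc i₀)) (fun i => div_le_one_of_le₀ (hmax i) (hc i₀))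
  push_cast at hfract
  have hq1 : (1 : ℝ) ≤ q := by exact_mod_cast hq0
  have hqc : 4 * n * q ≤ c i₀ := le_trans (by exact_mod_cast hq) hbig
  have hs : (q + 1 / (4 * n)) / c i₀ ≤ 1 / 2 := by
    rw [div_le_iff₀ (by linarith), ← mul_le_mul_iff_right₀ (show (0 : ℝ) < 4 * n by linarith)]
    field_simp
    nlinarith
  have hmul (i : ι) : (q + 1 / (4 * n)) / c i₀ * c i = (q + 1 / (4 * n)) * (c i / c i₀) := by ring
  have hfract₀ : Int.fract ((q + 1 / (4 * n)) * (c i₀ / c i₀)) ≤ (1 / (4 * n) : ℝ) := by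
    rw [div_self (by linarith), mul_one, Int.fract_natCast_add]
    exact fract_le_of_nonneg_of_le (by positivity) le_rfl
  refine ⟨(q + 1 / (4 * n)) / c i₀, by positivity, by linarith, ?_, ?_⟩
  · rw [div_mul_cancel₀ _ (by linarith)]
    exact le_add_of_le_of_nonneg hq1 (by positivity)
  calc ∑ i, Int.fract ((q + 1 / (4 * n)) / c i₀ * c i)
      = Int.fract ((q + 1 / (4 * n)) * (c i₀ / c i₀)) +
          ∑ i : {i // i ≠ i₀}, Int.fract ((q + 1 / (4 * n)) * (c i / c i₀)) := by
        simp only [hmul, Fintype.sum_eq_add_sum_subtype_ne _ i₀]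
    _ ≤ 1 / (4 * n) + ((n : ℝ) - 1) * (2 / (4 * n)) := by
        refine add_le_add hfract₀ ((Finset.sum_le_card_nsmul _ _ _ fun i _ => hfract i).trans ?_)
        rw [Finset.card_univ, nsmul_eq_mul]
        gcongr
        rw [le_sub_iff_add_le]
        exact_mod_cast (by lia : Fintype.card {i // i ≠ i₀} + 1 ≤ n)
    _ ≤ 1 / 2 := by field_simp; linarith
    _ ≤ 1 - (q + 1 / (4 * n)) / c i₀ := by linarith

end DiophantineApproximation

lemma isClosed_union_range_of_finite_notMem_thickening {X ι : Type*} [MetricSpace X]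
    {A : Set X} (hA : IsClosed A) {f : ι → X}
    (hf : ∀ ε > 0, {i | f i ∉ Metric.thickening ε A}.Finite) :
    IsClosed (A ∪ range f) := by
  have heq : A ∪ range f =
      ⋂ ε > 0, Metric.cthickening ε A ∪ f '' {i | f i ∉ Metric.thickening ε A} := by
    refine subset_antisymm (subset_iInter₂ fun ε _ => union_subset ?_ ?_) fun x hx => ?_
    · exact (Metric.self_subset_cthickening A).trans subset_union_left
    · rintro _ ⟨i, rfl⟩
      by_cases hi : f i ∈ Metric.thickening ε A
      · exact Or.inl (Metric.thickening_subset_cthickening ε A hi)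
      · exact Or.inr ⟨i, hi, rfl⟩
    · by_contra hxA
      simp only [mem_union, mem_range, not_or, not_exists] at hxA
      refine hxA.1 ?_
      rw [← hA.closure_eq, Metric.closure_eq_iInter_cthickening]
      refine mem_iInter₂.2 fun ε hε => (mem_iInter₂.1 hx ε hε).resolve_right ?_
      rintro ⟨i, -, hi⟩
      exact hxA.2 i hi
  rw [heq]
  exact isClosed_biInter fun ε hε => Metric.isClosed_cthickening.union ((hf ε hε).image f).isClosed

section CompactConvexHull

variable {E : Type*} [NormedAddCommGroup E] [NormedSpace ℝ E] [FiniteDimensional ℝ E]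

lemma convexHull_eq_biUnion_image_stdSimplex (s : Set E) :
    convexHull ℝ s = ⋃ k ∈ Finset.range (Module.finrank ℝ E + 2),
      (fun p : (Fin k → ℝ) × (Fin k → E) => ∑ i, p.1 i • p.2 i) ''
        (stdSimplex ℝ (Fin k) ×ˢ univ.pi fun _ => s) := by
  refine subset_antisymm (fun x hx => ?_) (iUnion₂_subset fun k _ => ?_)
  · obtain ⟨ι, _, z, w, hz, hind, hw0, hw1, rfl⟩ := eq_pos_convex_span_of_mem_convexHull hx
    let e := (Fintype.equivFin ι).symm
    refine mem_iUnion₂.2 ⟨Fintype.card ι, ?_, (w ∘ e, z ∘ e), ⟨⟨fun i => (hw0 _).le, ?_⟩,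
      fun i _ => hz (mem_range_self _)⟩, e.sum_comp fun i => w i • z i⟩
    · have := hind.card_le_finrank_succ.trans (Nat.succ_le_succ (Submodule.finrank_le _))
      exact Finset.mem_range.2 (by lia)
    · exact (e.sum_comp w).trans hw1
  · rintro _ ⟨p, ⟨hw, hz⟩, rfl⟩
    exact (convex_convexHull ℝ s).sum_mem (fun i _ => hw.1 i) hw.2
      fun i _ => subset_convexHull ℝ s (hz i trivial)

lemma isCompact_convexHull_of_isCompact {s : Set E} (hs : IsCompact s) :
    IsCompact (convexHull ℝ s) := by
  rw [convexHull_eq_biUnion_image_stdSimplex]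
  exact Finset.isCompact_biUnion _ fun k _ =>
    ((isCompact_stdSimplex ℝ (Fin k)).prod (isCompact_univ_pi fun _ => hs)).image (by fun_prop)

end CompactConvexHull

section ConicCaratheodory

variable {𝕜 E : Type*} [Field 𝕜] [LinearOrder 𝕜] [IsStrictOrderedRing 𝕜] [AddCommGroup E]
  [Module 𝕜 E]

lemma mem_hull_finset_iff {t : Finset E} {x : E} :
    x ∈ PointedCone.hull 𝕜 (t : Set E) ↔
      ∃ c : E → 𝕜, (∀ a ∈ t, 0 ≤ c a) ∧ ∑ a ∈ t, c a • a = x := by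
  classical
  rw [Submodule.mem_span_finset]
  constructor
  · rintro ⟨c, -, rfl⟩
    exact ⟨fun a => c a, fun a _ => (c a).2, rfl⟩
  · rintro ⟨c, hc, rfl⟩
    refine ⟨fun a => if h : a ∈ t then ⟨c a, hc a h⟩ else 0, fun a ha => ?_,
      Finset.sum_congr rfl fun a ha => by simp only [dif_pos ha]; rfl⟩
    by_contra hat
    exact ha (dif_neg hat)

lemma exists_mem_hull_erase [DecidableEq E] {t : Finset E} {x : E}
    (hx : x ∈ PointedCone.hull 𝕜 (t : Set E)) (ht : ¬ LinearIndepOn 𝕜 id (t : Set E)) :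
    ∃ a ∈ t, x ∈ PointedCone.hull 𝕜 (t.erase a : Set E) := by
  obtain ⟨c, hc, rfl⟩ := mem_hull_finset_iff.1 hx
  obtain ⟨g, hg, b, hb, hgb⟩ : ∃ g : E → 𝕜, ∑ a ∈ t, g a • a = 0 ∧ ∃ a ∈ t, 0 < g a := by
    rw [linearIndepOn_finset_iff] at ht
    push Not at ht
    obtain ⟨g, hg, a, ha, hga⟩ := ht
    rcases hga.lt_or_gt with h | h
    · exact ⟨-g, by simpa using hg, a, ha, by simpa using h⟩
    · exact ⟨g, hg, a, ha, h⟩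
  obtain ⟨a, ha, hmin⟩ := Finset.exists_min_image (t.filter (0 < g ·)) (fun a => c a / g a)
    ⟨b, Finset.mem_filter.2 ⟨hb, hgb⟩⟩
  obtain ⟨hat, hga⟩ := Finset.mem_filter.1 ha
  refine ⟨a, hat, mem_hull_finset_iff.2 ⟨fun i => c i - c a / g a * g i, fun i hi => ?_, ?_⟩⟩
  · have hit := Finset.mem_of_mem_erase hi
    rcases lt_or_ge 0 (g i) with hgi | hgi
    · have := hmin i (Finset.mem_filter.2 ⟨hit, hgi⟩)
      rw [le_div_iff₀ hgi] at this
      linarith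
    · have := mul_nonneg_of_nonpos_of_nonpos (neg_nonpos.2 (div_nonneg (hc a hat) hga.le)) hgi
      linarith [hc i hit]
  · rw [Finset.sum_erase _ (by simp only [div_mul_cancel₀ _ hga.ne', sub_self, zero_smul])]
    simp only [sub_smul, Finset.sum_sub_distrib, mul_smul, ← Finset.smul_sum, hg, smul_zero,
      sub_zero]

lemma exists_linearIndepOn_of_mem_hull {s : Set E} {x : E} (hx : x ∈ PointedCone.hull 𝕜 s) :
    ∃ t : Finset E, (t : Set E) ⊆ s ∧ LinearIndepOn 𝕜 id (t : Set E) ∧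
      x ∈ PointedCone.hull 𝕜 (t : Set E) := by
  classical
  obtain ⟨t, hts, hxt⟩ := Submodule.mem_span_finite_of_mem_span hx
  induction hk : t.card generalizing t with
  | zero =>
    obtain rfl := Finset.card_eq_zero.1 hk
    exact ⟨∅, hts, by simp, hxt⟩
  | succ k ih =>
    by_cases hind : LinearIndepOn 𝕜 id (t : Set E)
    · exact ⟨t, hts, hind, hxt⟩
    · obtain ⟨a, ha, hxa⟩ := exists_mem_hull_erase hxt hind
      exact ih (t.erase a) (subset_trans (by simp) hts) hxa
        (by rw [Finset.card_erase_of_mem ha, hk, Nat.add_sub_cancel])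

end ConicCaratheodory

section Faces

variable {𝕜 E : Type*} [Field 𝕜] [LinearOrder 𝕜] [IsStrictOrderedRing 𝕜] [AddCommGroup E]
  [Module 𝕜 E] {T G : PointedCone 𝕜 E}

lemma le_hull_inter_of_isFaceOf {s : Set E} (hG : G.IsFaceOf (PointedCone.hull 𝕜 s)) :
    G ≤ PointedCone.hull 𝕜 (s ∩ G) := by
  intro x hx
  obtain ⟨t, hts, hxt⟩ := Submodule.mem_span_finite_of_mem_span (hG.le hx)
  obtain ⟨c, hc, rfl⟩ := mem_hull_finset_iff.1 hxt
  refine Submodule.sum_mem _ fun a ha => ?_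
  rcases (hc a ha).eq_or_lt with h | h
  · simp [← h]
  · rw [← Finset.sum_coe_sort] at hx
    have haG := hG.mem_of_sum_smul_mem (fun a : t => PointedCone.subset_hull (hts a.2))
      (fun a : t => hc a a.2) hx ⟨a, ha⟩ h
    exact PointedCone.smul_mem _ h.le (PointedCone.subset_hull ⟨hts ha, haG⟩)

lemma span_hull (s : Set E) :
    Submodule.span 𝕜 (PointedCone.hull 𝕜 s : Set E) = Submodule.span 𝕜 s :=
  Submodule.span_span_of_tower _ 𝕜 s

lemma exists_add_mem_of_mem_span {x : E} (hx : x ∈ Submodule.span 𝕜 (G : Set E)) :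
    ∃ g ∈ G, x + g ∈ G := by
  induction hx using Submodule.span_induction with
  | mem x hx => exact ⟨0, G.zero_mem, by simpa using hx⟩
  | zero => exact ⟨0, G.zero_mem, by simp⟩
  | add x y _ _ hx hy =>
    obtain ⟨g, hg, hxg⟩ := hx
    obtain ⟨h, hh, hyh⟩ := hy
    exact ⟨g + h, G.add_mem hg hh, by rw [add_add_add_comm]; exact G.add_mem hxg hyh⟩
  | smul c x _ hx =>
    obtain ⟨g, hg, hxg⟩ := hx
    rcases le_total 0 c with hc | hc
    · exact ⟨c • g, G.smul_mem hc hg, by rw [← smul_add]; exact G.smul_mem hc hxg⟩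
    · refine ⟨-c • (x + g), G.smul_mem (neg_nonneg.2 hc) hxg, ?_⟩
      rw [smul_add, neg_smul, add_neg_cancel_left]
      exact G.smul_mem (neg_nonneg.2 hc) hg

lemma mem_of_isFaceOf_of_mem_span (hG : G.IsFaceOf T) {x : E} (hxT : x ∈ T)
    (hx : x ∈ Submodule.span 𝕜 (G : Set E)) : x ∈ G := by
  obtain ⟨g, hg, hxg⟩ := exists_add_mem_of_mem_span hx
  exact hG.mem_of_add_mem_left hxT (hG.le hg) hxg

end Faces

section FaceInterior

variable {E : Type*} [NormedAddCommGroup E] [NormedSpace ℝ E]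

lemma span_eq_top_of_isFaceOf_of_mem_interior {T G : PointedCone ℝ E} (hG : G.IsFaceOf T) {x : E}
    (hx : x ∈ interior (T : Set E)) (hxG : x ∈ Submodule.span ℝ (G : Set E)) :
    Submodule.span ℝ (G : Set E) = ⊤ := by
  have hxG' : x ∈ G := mem_of_isFaceOf_of_mem_span hG (interior_subset hx) hxG
  refine Submodule.eq_top_iff'.2 fun y => ?_
  have hcont : ContinuousAt (fun ε : ℝ => (x + ε • y, x - ε • y)) 0 := by fun_prop
  have hnhds : ∀ᶠ ε : ℝ in 𝓝 0, x + ε • y ∈ T ∧ x - ε • y ∈ T := by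
    refine hcont.eventually (p := fun z => z.1 ∈ T ∧ z.2 ∈ T) ?_
    simp only [zero_smul, add_zero, sub_zero]
    have := mem_interior_iff_mem_nhds.1 hx
    exact Filter.Eventually.prodMk_nhds this this
  obtain ⟨ε, ⟨hadd, hsub⟩, hε⟩ := ((hnhds.filter_mono nhdsWithin_le_nhds).and
    (self_mem_nhdsWithin (s := Ioi (0 : ℝ)))).exists
  have hmem : x + ε • y ∈ G := by
    refine hG.mem_of_add_mem_left hadd hsub ?_
    rw [add_add_sub_cancel]
    exact G.add_mem hxG' hxG'
  rw [← Submodule.smul_mem_iff _ (ne_of_gt hε), ← add_sub_cancel_left x (ε • y)]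
  exact Submodule.sub_mem _ (Submodule.subset_span hmem) hxG

end FaceInterior

section ConicKreinMilman

variable {E : Type*} [NormedAddCommGroup E] [NormedSpace ℝ E]

lemma exists_forall_pos_of_salient [FiniteDimensional ℝ E] {Z : Set E} (hZ : IsCompact Z)
    (hZ0 : 0 ∉ Z) (hsal : (PointedCone.hull ℝ Z : ConvexCone ℝ E).Salient) :
    ∃ f : StrongDual ℝ E, ∀ z ∈ Z, 0 < f z := by
  have hconv : Convex ℝ ((PointedCone.hull ℝ Z : Set E) \ {0}) := by
    rintro x ⟨hx, hx0⟩ y ⟨hy, hy0⟩ a b ha hb hab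
    refine ⟨(PointedCone.hull ℝ Z).convex hx hy ha hb hab, fun h => ?_⟩
    have hax : a • x = -(b • y) := eq_neg_of_add_eq_zero_left h
    have hby0 : b • y = 0 := by
      by_contra hne
      refine hsal _ ((PointedCone.hull ℝ Z).smul_mem hb hy) hne ?_
      rw [← hax]
      exact (PointedCone.hull ℝ Z).smul_mem ha hx
    rw [hby0, neg_zero, smul_eq_zero_iff_left hx0] at hax
    rw [smul_eq_zero_iff_left hy0] at hby0
    simp [hax, hby0] at hab
  have hZT : Z ⊆ (PointedCone.hull ℝ Z : Set E) \ {0} := fun z hz =>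
    ⟨PointedCone.subset_hull hz, ne_of_mem_of_not_mem hz hZ0⟩
  have h0 : (0 : E) ∉ convexHull ℝ Z := fun h => (convexHull_min hZT hconv h).2 rfl
  obtain ⟨f, u, hu, hf⟩ := geometric_hahn_banach_point_closed (convex_convexHull ℝ Z)
    (isCompact_convexHull_of_isCompact hZ).isClosed h0
  rw [map_zero] at hu
  exact ⟨f, fun z hz => hu.trans (hf z (subset_convexHull ℝ Z hz))⟩

section Base

variable {T : PointedCone ℝ E} {f : StrongDual ℝ E}

lemma mem_hull_singleton_iff {b x : E} :
    x ∈ PointedCone.hull ℝ {b} ↔ ∃ a : ℝ, 0 ≤ a ∧ a • b = x := by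
  rw [Submodule.mem_span_singleton]
  exact ⟨fun ⟨a, h⟩ => ⟨a, a.2, h⟩, fun ⟨a, ha, h⟩ => ⟨⟨a, ha⟩, h⟩⟩

lemma pos_of_mem_hull {Z : Set E} (hf : ∀ z ∈ Z, 0 < f z) {x : E} (hx : x ∈ PointedCone.hull ℝ Z)
    (hx0 : x ≠ 0) : 0 < f x := by
  obtain ⟨t, htZ, hxt⟩ := Submodule.mem_span_finite_of_mem_span hx
  obtain ⟨c, hc, rfl⟩ := mem_hull_finset_iff.1 hxt
  obtain ⟨a, ha, hca⟩ := Finset.exists_ne_zero_of_sum_ne_zero hx0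
  simp only [map_sum, map_smul, smul_eq_mul]
  exact Finset.sum_pos' (fun i hi => mul_nonneg (hc i hi) (hf i (htZ hi)).le) ⟨a, ha,
    mul_pos ((hc a ha).lt_of_ne' (left_ne_zero_of_smul hca)) (hf a (htZ ha))⟩

lemma setOf_mem_hull_and_eq_one {Z : Set E} (hf : ∀ z ∈ Z, 0 < f z) :
    {x | x ∈ PointedCone.hull ℝ Z ∧ f x = 1} = convexHull ℝ ((fun z => (f z)⁻¹ • z) '' Z) := by
  refine subset_antisymm ?_ (convexHull_min ?_ ?_)
  · rintro x ⟨hx, hfx⟩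
    obtain ⟨t, htZ, hxt⟩ := Submodule.mem_span_finite_of_mem_span hx
    obtain ⟨c, hc, rfl⟩ := mem_hull_finset_iff.1 hxt
    simp only [map_sum, map_smul, smul_eq_mul] at hfx
    have hsum : ∑ a ∈ t, (c a * f a) • (f a)⁻¹ • a = ∑ a ∈ t, c a • a :=
      Finset.sum_congr rfl fun a ha => by
        rw [smul_smul, mul_assoc, mul_inv_cancel₀ (hf a (htZ ha)).ne', mul_one]
    rw [← hsum]
    exact (convex_convexHull ℝ _).sum_mem (fun a ha => mul_nonneg (hc a ha) (hf a (htZ ha)).le) hfx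
      fun a ha => subset_convexHull ℝ _ (mem_image_of_mem _ (htZ ha))
  · rintro _ ⟨z, hz, rfl⟩
    exact ⟨PointedCone.smul_mem _ (inv_nonneg.2 (hf z hz).le) (PointedCone.subset_hull hz), by
      rw [map_smul, smul_eq_mul, inv_mul_cancel₀ (hf z hz).ne']⟩
  · exact (PointedCone.convex _).inter (convex_hyperplane f.isLinear 1)

lemma isFaceOf_hull_singleton_of_mem_extremePoints (hf : ∀ x ∈ T, x ≠ 0 → 0 < f x) {b : E}
    (hb : b ∈ extremePoints ℝ {x | x ∈ T ∧ f x = 1}) : (PointedCone.hull ℝ {b}).IsFaceOf T := by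
  obtain ⟨⟨hbT, hfb⟩, hext⟩ := mem_extremePoints_iff_left.1 hb
  have hbase {x : E} (hx : x ∈ T) (hfx : 0 < f x) : (f x)⁻¹ • x ∈ {x | x ∈ T ∧ f x = 1} :=
    ⟨T.smul_mem (inv_nonneg.2 hfx.le) hx, by rw [map_smul, smul_eq_mul, inv_mul_cancel₀ hfx.ne']⟩
  refine .of_mem_of_add_mem_left (Submodule.span_le.2 (by simpa using hbT)) ?_
  intro x y hx hy hxy
  rcases eq_or_ne x 0 with rfl | hx0
  · exact Submodule.zero_mem _
  rcases eq_or_ne y 0 with rfl | hy0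
  · simpa using hxy
  have hfx := hf x hx hx0
  have hfy := hf y hy hy0
  obtain ⟨a, -, hab⟩ := mem_hull_singleton_iff.1 hxy
  have ha : a = f x + f y := by simpa [hfb] using congrArg f hab
  have hbseg : b ∈ openSegment ℝ ((f x)⁻¹ • x) ((f y)⁻¹ • y) := by
    refine ⟨f x / (f x + f y), f y / (f x + f y), by positivity, by positivity, by field_simp, ?_⟩
    rw [smul_smul, smul_smul, div_mul_eq_mul_div, div_mul_eq_mul_div, mul_inv_cancel₀ hfx.ne',
      mul_inv_cancel₀ hfy.ne', ← smul_add, ← hab, ha, smul_smul, one_div,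
      inv_mul_cancel₀ (by positivity), one_smul]
  exact mem_hull_singleton_iff.2 ⟨f x, hfx.le, by
    rw [← hext _ (hbase hx hfx) _ (hbase hy hfy) hbseg, smul_inv_smul₀ hfx.ne']⟩

end Base

lemma hull_le_hull_of_forall_extremeRay [FiniteDimensional ℝ E] {Z s : Set E} (hZ : IsCompact Z)
    (hZ0 : 0 ∉ Z) (hsal : (PointedCone.hull ℝ Z : ConvexCone ℝ E).Salient) (hs : s.Finite)
    (hray : ∀ b ≠ 0, (PointedCone.hull ℝ {b}).IsFaceOf (PointedCone.hull ℝ Z) →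
      ∃ x ∈ s, b ∈ PointedCone.hull ℝ {x}) :
    PointedCone.hull ℝ Z ≤ PointedCone.hull ℝ s := by
  obtain ⟨f, hf⟩ := exists_forall_pos_of_salient hZ hZ0 hsal
  set B : Set E := {x | x ∈ PointedCone.hull ℝ Z ∧ f x = 1} with hB
  have hBcompact : IsCompact B := by
    rw [hB, setOf_mem_hull_and_eq_one hf]
    refine isCompact_convexHull_of_isCompact (hZ.image_of_continuousOn ?_)
    exact (f.continuous.continuousOn.inv₀ fun z hz => (hf z hz).ne').smul continuousOn_id
  have hext : extremePoints ℝ B ⊆ ((fun x => (f x)⁻¹ • x) '' s) ∩ PointedCone.hull ℝ s := by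
    intro b hb
    have hfb : f b = 1 := hb.1.2
    obtain ⟨x, hxs, hbx⟩ := hray b (by rintro rfl; simp at hfb)
      (isFaceOf_hull_singleton_of_mem_extremePoints (fun x => pos_of_mem_hull hf) hb)
    refine ⟨⟨x, hxs, ?_⟩, Submodule.span_mono (singleton_subset_iff.2 hxs) hbx⟩
    obtain ⟨a, -, rfl⟩ := mem_hull_singleton_iff.1 hbx
    rw [map_smul, smul_eq_mul] at hfb
    exact congrArg (· • x) (eq_inv_of_mul_eq_one_left hfb).symm
  have hBs : B ⊆ PointedCone.hull ℝ s := by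
    have hBconv : Convex ℝ B := (PointedCone.convex _).inter (convex_hyperplane f.isLinear 1)
    rw [← closure_convexHull_extremePoints hBcompact hBconv,
      (((hs.image _).subset (hext.trans inter_subset_left)).isClosed_convexHull ℝ).closure_eq]
    exact convexHull_min (hext.trans inter_subset_right) (PointedCone.convex _)
  refine Submodule.span_le.2 fun z hz => ?_
  rw [← smul_inv_smul₀ (hf z hz).ne' z]
  exact PointedCone.smul_mem _ (hf z hz).le (hBs ⟨PointedCone.smul_mem _ (inv_nonneg.2 (hf z hz).le)
    (PointedCone.subset_hull hz), by rw [map_smul, smul_eq_mul, inv_mul_cancel₀ (hf z hz).ne']⟩)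

end ConicKreinMilman

section FeasibleCone

variable {E : Type*} [AddCommGroup E] [Module ℝ E] {K F : Set E} {v x : E}

/-- The cone of feasible directions of `K` at `v`, generated by the differences `y - v`, `y ∈ K`.
No closure is taken, in contrast to the tangent cone. -/
def feasibleCone (K : Set E) (v : E) : PointedCone ℝ E := PointedCone.hull ℝ ((· - v) '' K)

lemma sub_mem_feasibleCone {y : E} (hy : y ∈ K) : y - v ∈ feasibleCone K v :=
  PointedCone.subset_hull (mem_image_of_mem _ hy)

lemma mem_feasibleCone_of_add_smul_mem {l : ℝ} (hl : 0 < l) (hx : v + l • x ∈ K) :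
    x ∈ feasibleCone K v := by
  have := PointedCone.smul_mem _ (inv_nonneg.2 hl.le) (sub_mem_feasibleCone (v := v) hx)
  rwa [add_sub_cancel_left, inv_smul_smul₀ hl.ne'] at this

lemma mem_feasibleCone_of_add_mem (hx : v + x ∈ K) : x ∈ feasibleCone K v :=
  mem_feasibleCone_of_add_smul_mem one_pos (by rwa [one_smul])

lemma tendsto_mul_const_nhdsGT_zero {c : ℝ} (hc : 0 < c) :
    Filter.Tendsto (· * c) (𝓝[>] 0) (𝓝[>] 0) := by
  have : Filter.Tendsto (· * c) (𝓝[>] 0) (𝓝 (0 * c)) :=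
    (continuous_mul_const c).continuousAt.mono_left nhdsWithin_le_nhds
  rw [zero_mul] at this
  exact tendsto_nhdsWithin_iff.2 ⟨this, eventually_mem_nhdsWithin.mono fun l hl => mul_pos hl hc⟩

lemma eventually_add_smul_mem (hK : Convex ℝ K) (hv : v ∈ K) (hx : x ∈ feasibleCone K v) :
    ∀ᶠ l : ℝ in 𝓝[>] 0, v + l • x ∈ K := by
  induction hx using Submodule.span_induction with
  | mem x hx =>
    obtain ⟨y, hy, rfl⟩ := hx
    filter_upwards [Ioc_mem_nhdsGT one_pos] with l hl
    exact hK.add_smul_sub_mem hv hy ⟨hl.1.le, hl.2⟩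
  | zero => simpa using hv
  | add x y _ _ hx hy =>
    filter_upwards [(tendsto_mul_const_nhdsGT_zero two_pos).eventually hx,
      (tendsto_mul_const_nhdsGT_zero two_pos).eventually hy] with l hlx hly
    convert! hK hlx hly (by norm_num : (0 : ℝ) ≤ 1 / 2) (by norm_num : (0 : ℝ) ≤ 1 / 2)
      (by norm_num) using 1
    module
  | smul c x _ hx =>
    rcases c.2.eq_or_lt with hc | hc
    · obtain rfl : c = 0 := Subtype.ext hc.symm
      simpa using hv
    · filter_upwards [(tendsto_mul_const_nhdsGT_zero hc).eventually hx] with l hl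
      rwa [mul_smul] at hl

lemma convex_preimage_sub_const (hK : Convex ℝ K) (v : E) : Convex ℝ ((· - v) ⁻¹' K) := by
  simpa only [sub_eq_add_neg] using hK.translate_preimage_left (-v)

lemma feasibleCone_convexHull {S : Set E} :
    feasibleCone (convexHull ℝ S) v = PointedCone.hull ℝ ((· - v) '' S) := by
  refine le_antisymm (Submodule.span_le.2 ?_)
    (Submodule.span_mono (image_mono (subset_convexHull ℝ S)))
  exact image_subset_iff.2
    (convexHull_min (fun y hy => PointedCone.subset_hull (mem_image_of_mem _ hy))
      (convex_preimage_sub_const (PointedCone.convex _) v))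

lemma salient_feasibleCone (hK : Convex ℝ K) (hv : v ∈ extremePoints ℝ K) :
    (feasibleCone K v : ConvexCone ℝ E).Salient := by
  intro x hx hx0 hnx
  obtain ⟨l, ⟨hadd, hsub⟩, hl⟩ := (((eventually_add_smul_mem hK hv.1 hx).and
    (eventually_add_smul_mem hK hv.1 hnx)).and (eventually_mem_nhdsWithin)).exists
  have hmid : v ∈ openSegment ℝ (v + l • x) (v + l • -x) :=
    ⟨1 / 2, 1 / 2, by norm_num, by norm_num, by norm_num, by module⟩
  have hlx : l • x = 0 := by simpa using (mem_extremePoints_iff_left.1 hv).2 _ hadd _ hsub hmid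
  exact hx0 ((smul_eq_zero_iff_right (ne_of_gt hl)).1 hlx)

lemma isFaceOf_feasibleCone (hK : Convex ℝ K) (hF : IsExtreme ℝ K F) (hFc : Convex ℝ F)
    (hv : v ∈ F) : (feasibleCone F v).IsFaceOf (feasibleCone K v) := by
  refine .of_mem_of_add_mem_left (Submodule.span_mono (image_mono hF.1)) fun {x y} hx hy hxy => ?_
  obtain ⟨l, ⟨⟨hlx, hly⟩, hlxy⟩, hl⟩ := (((eventually_add_smul_mem hK (hF.1 hv) hx).and
    (eventually_add_smul_mem hK (hF.1 hv) hy)).and ((tendsto_mul_const_nhdsGT_zero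
      one_half_pos).eventually (eventually_add_smul_mem hFc hv hxy)) |>.and
        eventually_mem_nhdsWithin).exists
  refine mem_feasibleCone_of_add_smul_mem hl (hF.2 hlx hly hlxy ?_)
  exact ⟨1 / 2, 1 / 2, by norm_num, by norm_num, by norm_num, by module⟩

lemma direction_affineSpan_eq_span_feasibleCone (hv : v ∈ F) :
    (affineSpan ℝ F).direction = Submodule.span ℝ (feasibleCone F v : Set E) := by
  rw [direction_affineSpan, vectorSpan_eq_span_vsub_set_right ℝ hv, feasibleCone, span_hull]
  rfl

lemma isExtreme_setOf_sub_mem {G : PointedCone ℝ E} (hG : G.IsFaceOf (feasibleCone K v)) :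
    IsExtreme ℝ K {y | y ∈ K ∧ y - v ∈ G} := by
  refine ⟨fun y hy => hy.1, ?_⟩
  rintro x hx y hy _ ⟨-, hzG⟩ ⟨a, b, ha, hb, hab, rfl⟩
  refine ⟨hx, hG.mem_of_smul_add_smul_mem_left (sub_mem_feasibleCone hx) (sub_mem_feasibleCone hy)
    ha hb ?_⟩
  rwa [smul_sub, smul_sub, sub_add_sub_comm, ← add_smul, hab, one_smul]

lemma feasibleCone_setOf_sub_mem (hK : Convex ℝ K) (hv : v ∈ K) {G : PointedCone ℝ E}
    (hG : G ≤ feasibleCone K v) : feasibleCone {y | y ∈ K ∧ y - v ∈ G} v = G := by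
  refine le_antisymm (Submodule.span_le.2 (image_subset_iff.2 fun y hy => hy.2)) fun x hx => ?_
  obtain ⟨l, hlx, hl⟩ := ((eventually_add_smul_mem hK hv (hG hx)).and
    eventually_mem_nhdsWithin).exists
  refine mem_feasibleCone_of_add_smul_mem hl ⟨hlx, ?_⟩
  rw [add_sub_cancel_left]
  exact G.smul_mem (le_of_lt hl) hx

end FeasibleCone

section SmallCoefficients

variable {𝕜 E : Type*} [Field 𝕜] [AddCommGroup E] [Module 𝕜 E] {ι : Type*} [Fintype ι] {f : ι → E}

lemma exists_linearMap_sum_smul_eq_of_mem_span (hf : LinearIndependent 𝕜 f) :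
    ∃ g : E →ₗ[𝕜] ι → 𝕜, ∀ y ∈ Submodule.span 𝕜 (range f), ∑ i, g y i • f i = y := by
  obtain ⟨g, hg⟩ := (Fintype.linearCombination 𝕜 f).exists_leftInverse_of_injective
    (LinearMap.ker_eq_bot.2 hf.fintypeLinearCombination_injective)
  refine ⟨g, fun y hy => ?_⟩
  rw [← Fintype.range_linearCombination 𝕜] at hy
  obtain ⟨c, rfl⟩ := hy
  exact congrArg (Fintype.linearCombination 𝕜 f) (LinearMap.congr_fun hg c)

variable [LinearOrder 𝕜] [IsStrictOrderedRing 𝕜]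

lemma add_sum_smul_mem_of_forall_add_sub_mem {P : PointedCone 𝕜 E} {l : E}
    (hl : l ∈ P) (hadd : ∀ i, l + f i ∈ P) (hsub : ∀ i, l - f i ∈ P) {c : ι → 𝕜}
    (hc : ∑ i, |c i| ≤ 1) : l + ∑ i, c i • f i ∈ P := by
  have hsign (i : ι) : l + (SignType.sign (c i) : 𝕜) • f i ∈ P := by
    rcases lt_trichotomy (c i) 0 with h | h | h
    · simpa [sign_neg h, sub_eq_add_neg] using hsub i
    · simpa [h] using hl
    · simpa [sign_pos h] using hadd i
  have hdecomp : l + ∑ i, c i • f i = (1 - ∑ i, |c i|) • l +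
      ∑ i, |c i| • (l + (SignType.sign (c i) : 𝕜) • f i) := by
    simp only [smul_add, smul_smul, abs_mul_sign, Finset.sum_add_distrib, ← Finset.sum_smul]
    module
  rw [hdecomp]
  exact P.add_mem (P.smul_mem (sub_nonneg.2 hc) hl)
    (Submodule.sum_mem _ fun i _ => P.smul_mem (abs_nonneg _) (hsign i))

end SmallCoefficients

section NearRay

variable {E : Type*} [NormedAddCommGroup E] [NormedSpace ℝ E] [FiniteDimensional ℝ E]
  {L : AddSubgroup E} {ω : E}

lemma exists_forall_mem_span_norm_lt_exists_sum_abs_le_one {ι : Type*} [Fintype ι] {f : ι → E}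
    (hf : LinearIndependent ℝ f) :
    ∃ η > 0, ∀ y ∈ Submodule.span ℝ (range f), ‖y‖ < η →
      ∃ c : ι → ℝ, ∑ i, |c i| ≤ 1 ∧ ∑ i, c i • f i = y := by
  obtain ⟨g, hg⟩ := exists_linearMap_sum_smul_eq_of_mem_span hf
  have hcont : Continuous fun y => ∑ i, |g y i| := by
    have := g.continuous_of_finiteDimensional
    fun_prop
  obtain ⟨η, hη, hball⟩ := Metric.eventually_nhds_iff.1
    (hcont.continuousAt.eventually_lt (x₀ := 0) (continuousAt_const (y := (1 : ℝ))) (by simp))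
  exact ⟨η, hη, fun y hy hyη => ⟨g y, (hball (by rwa [dist_zero_right])).le, hg y hy⟩⟩

/-- The points of `L` at distance less than `δ` from some point of the ray `ℝ≥0 • ω`; the cone they
generate contains the ray if the ray is well approximated by `L`. -/
def pointsNearRay (L : AddSubgroup E) (ω : E) (δ : ℝ) : Set E :=
  {u | u ∈ L ∧ ∃ t : ℝ, 0 ≤ t ∧ ‖u - t • ω‖ < δ}

lemma mem_span_pointsNearRay {δ : ℝ} (hδ : 0 < δ)
    (hL : ∀ ε > 0, ∀ R : ℝ, ∃ u ∈ L, ∃ t ≥ R, ‖u - t • ω‖ < ε) :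
    ω ∈ Submodule.span ℝ (pointsNearRay L ω δ) := by
  have hclosed := (Submodule.span ℝ (pointsNearRay L ω δ)).closed_of_finiteDimensional
  rw [← SetLike.mem_coe, ← hclosed.closure_eq, Metric.mem_closure_iff]
  intro ε hε
  obtain ⟨u, hu, t, ht, hut⟩ := hL (min ε δ) (lt_min hε hδ) 1
  have ht0 : 0 < t := one_pos.trans_le ht
  refine ⟨t⁻¹ • u, Submodule.smul_mem _ _ (Submodule.subset_span
    ⟨hu, t, ht0.le, hut.trans_le (min_le_right _ _)⟩), ?_⟩
  calc dist ω (t⁻¹ • u) = t⁻¹ * ‖u - t • ω‖ := by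
        rw [dist_comm, dist_eq_norm, ← norm_smul_of_nonneg (inv_nonneg.2 ht0.le), smul_sub,
          inv_smul_smul₀ ht0.ne']
    _ ≤ 1 * ‖u - t • ω‖ := by gcongr; exact inv_le_one_of_one_le₀ ht
    _ < ε := by linarith [min_le_left ε δ]

lemma mem_hull_pointsNearRay {δ : ℝ} (hδ : 0 < δ)
    (hL : ∀ ε > 0, ∀ R : ℝ, ∃ u ∈ L, ∃ t ≥ R, ‖u - t • ω‖ < ε) :
    ω ∈ PointedCone.hull ℝ (pointsNearRay L ω δ) := by
  obtain ⟨f, hf, hspan, hind⟩ :=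
    Submodule.exists_fun_fin_finrank_span_eq ℝ (pointsNearRay L ω (δ / 2))
  choose hfL τ hτ0 hτ using hf
  obtain ⟨η, hη, hcoord⟩ := exists_forall_mem_span_norm_lt_exists_sum_abs_le_one hind
  rw [hspan] at hcoord
  obtain ⟨l, hl, t, ht, hlt⟩ := hL (min η (δ / 2)) (lt_min hη (half_pos hδ)) (1 + ∑ i, τ i)
  have hlt' : ‖l - t • ω‖ < δ / 2 := hlt.trans_le (min_le_right _ _)
  have hτt (i) : τ i ≤ t := by
    linarith [Finset.single_le_sum (fun i _ => hτ0 i) (Finset.mem_univ i)]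
  have ht0 : 0 < t := by linarith [Finset.sum_nonneg fun i (_ : i ∈ Finset.univ) => hτ0 i]
  have hlV : l ∈ Submodule.span ℝ (pointsNearRay L ω (δ / 2)) :=
    Submodule.subset_span ⟨hl, t, ht0.le, hlt'⟩
  obtain ⟨c, hc, hsum⟩ := hcoord (t • ω - l)
    (sub_mem (Submodule.smul_mem _ _ (mem_span_pointsNearRay (half_pos hδ) hL)) hlV)
    (by rw [norm_sub_rev]; exact hlt.trans_le (min_le_left _ _))
  have hmem := add_sum_smul_mem_of_forall_add_sub_mem
    (P := PointedCone.hull ℝ (pointsNearRay L ω δ))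
    (PointedCone.subset_hull ⟨hl, t, ht0.le, by linarith⟩)
    (f := f) (fun i => ?_) (fun i => ?_) hc
  · rw [hsum, add_sub_cancel] at hmem
    have := PointedCone.smul_mem _ (inv_nonneg.2 ht0.le) hmem
    rwa [inv_smul_smul₀ ht0.ne'] at this
  · refine PointedCone.subset_hull ⟨L.add_mem hl (hfL i), t + τ i, by linarith [hτ0 i], ?_⟩
    rw [add_smul, add_sub_add_comm]
    linarith [norm_add_le (l - t • ω) (f i - τ i • ω), hτ i]
  · refine PointedCone.subset_hull ⟨L.sub_mem hl (hfL i), t - τ i, by linarith [hτt i], ?_⟩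
    rw [sub_smul, sub_sub_sub_comm]
    linarith [norm_sub_le (l - t • ω) (f i - τ i • ω), hτ i]

end NearRay

section IntegerPoints

variable {n : ℕ}

/-- The integer points of `ℝⁿ` as an additive subgroup, on the vectors satisfying `IsIntVec`. -/
def intLattice (n : ℕ) : AddSubgroup (Vec n) where
  carrier := {x | IsIntVec x}
  zero_mem' _ := ⟨0, by simp⟩
  add_mem' hx hy i := by
    obtain ⟨a, ha⟩ := hx i
    obtain ⟨b, hb⟩ := hy i
    exact ⟨a + b, by simp [ha, hb]⟩
  neg_mem' hx i := by
    obtain ⟨a, ha⟩ := hx i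
    exact ⟨-a, by simp [ha]⟩

lemma intCast_mem_intLattice (y : Fin n → ℤ) : intCast y ∈ intLattice n := fun i => ⟨y i, rfl⟩

lemma exists_intCast_eq {x : Vec n} (hx : x ∈ intLattice n) : ∃ y, intCast y = x := by
  choose y hy using hx
  exact ⟨y, funext fun i => (hy i).symm⟩

lemma finite_inter_intLattice {A : Set (Vec n)} (hA : Bornology.IsBounded A) :
    (A ∩ intLattice n).Finite := by
  refine (ZSpan.setFinite_inter (Pi.basisFun ℝ (Fin n)) hA).subset
    (inter_subset_inter_right A fun x hx => ?_)
  obtain ⟨y, rfl⟩ := exists_intCast_eq hx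
  exact ((Pi.basisFun ℝ (Fin n)).mem_span_iff_repr_mem ℤ _).2 fun i => ⟨y i, by simp [intCast]⟩

lemma exists_mem_intLattice_norm_sub_smul_lt (ω : Vec n) {ε : ℝ} (hε : 0 < ε) (R : ℝ) :
    ∃ u ∈ intLattice n, ∃ t ≥ R, ‖u - t • ω‖ < ε := by
  obtain ⟨N, hRN⟩ := exists_nat_ge R
  obtain ⟨Q, hQε⟩ := exists_nat_one_div_lt hε
  obtain ⟨q, hq, -, hqω⟩ := exists_nat_forall_abs_mul_sub_round_le (fun i => N * ω i) Q.succ_pos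
  have hN : (N : ℝ) ≤ q * N := le_mul_of_one_le_left N.cast_nonneg (by exact_mod_cast hq)
  refine ⟨_, intCast_mem_intLattice fun i => round (q * (N * ω i)), q * N, hRN.trans hN, ?_⟩
  refine lt_of_le_of_lt ((pi_norm_le_iff_of_nonneg (by positivity)).2 fun i => ?_) hQε
  simpa [intCast, mul_assoc, abs_sub_comm] using hqω i

lemma IsPrimitiveVec.exists_sum_mul_eq_one {r : Fin n → ℤ} (hr : IsPrimitiveVec r) :
    ∃ c : Fin n → ℤ, ∑ i, c i * r i = 1 := by
  obtain ⟨d, hd⟩ := (IsPrincipalIdealRing.principal (Ideal.span (range r))).principal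
  have hdvd (i : Fin n) : d ∣ r i :=
    Ideal.mem_span_singleton.1 (hd.le (Ideal.subset_span (mem_range_self i)))
  exact Ideal.mem_span_range_iff_exists_fun.1
    (hd.ge (Ideal.mem_span_singleton.2 (hr d hdvd).dvd))

lemma IsPrimitiveVec.exists_int_cast_eq {r : Fin n → ℤ} (hr : IsPrimitiveVec r) {t : ℝ}
    (ht : t • intCast r ∈ intLattice n) : ∃ k : ℤ, (k : ℝ) = t := by
  obtain ⟨c, hc⟩ := hr.exists_sum_mul_eq_one
  obtain ⟨g, hg⟩ := exists_intCast_eq ht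
  refine ⟨∑ i, c i * g i, ?_⟩
  have hgi (i : Fin n) : (g i : ℝ) = t * r i := congrFun hg i
  calc ((∑ i, c i * g i : ℤ) : ℝ) = t * ((∑ i, c i * r i : ℤ) : ℝ) := by
        push_cast
        rw [Finset.mul_sum]
        exact Finset.sum_congr rfl fun i _ => by rw [hgi, mul_left_comm]
    _ = t := by rw [hc, Int.cast_one, mul_one]

end IntegerPoints

open scoped Pointwise in
lemma add_mem_interior_of_mem_closure {M : Type*} [AddCommGroup M] [TopologicalSpace M]
    [IsTopologicalAddGroup M] {P : AddSubmonoid M} {x y : M} (hx : x ∈ interior (P : Set M))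
    (hy : y ∈ closure (P : Set M)) : x + y ∈ interior (P : Set M) := by
  have hsub : interior (P : Set M) + P ⊆ interior P :=
    interior_maximal (add_subset_iff.2 fun a ha b hb => P.add_mem (interior_subset ha) hb)
      isOpen_interior.add_right
  exact hsub (isOpen_interior.add_closure (P : Set M) ▸ add_mem_add hx hy)

section KleinPolyhedron

variable {n : ℕ}

/-- The Klein polyhedron of a set `C ⊆ ℝⁿ`: the convex hull of its nonzero integer points. -/
def kleinPolyhedron (C : Set (Vec n)) : Set (Vec n) :=
  convexHull ℝ {x | x ∈ C ∧ IsIntVec x ∧ x ≠ 0}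

lemma convex_kleinPolyhedron (C : Set (Vec n)) : Convex ℝ (kleinPolyhedron C) :=
  convex_convexHull ℝ _

lemma mem_kleinPolyhedron {C : Set (Vec n)} {x : Vec n} (hxC : x ∈ C) (hx : x ∈ intLattice n)
    (hx0 : x ≠ 0) : x ∈ kleinPolyhedron C :=
  subset_convexHull ℝ _ ⟨hxC, hx, hx0⟩

variable {C : PointedCone ℝ (Vec n)} {v : Vec n}

lemma kleinPolyhedron_subset (C : PointedCone ℝ (Vec n)) : kleinPolyhedron (C : Set (Vec n)) ⊆ C :=
  convexHull_min (fun _ hx => hx.1) C.convex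

lemma mem_intLattice_of_mem_extremePoints (hv : v ∈ extremePoints ℝ (kleinPolyhedron C)) :
    v ∈ intLattice n :=
  (extremePoints_convexHull_subset hv).2.1

lemma neg_notMem_of_mem_extremePoints (hv : v ∈ extremePoints ℝ (kleinPolyhedron C)) : -v ∉ C := by
  intro hneg
  obtain ⟨hvC, hvL, hv0⟩ := extremePoints_convexHull_subset hv
  have hnegK := mem_kleinPolyhedron hneg ((intLattice n).neg_mem hvL) (neg_ne_zero.2 hv0)
  have hdblK := mem_kleinPolyhedron (C.add_mem hvC hvC) ((intLattice n).add_mem hvL hvL)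
    (by rwa [← two_smul ℝ, smul_ne_zero_iff_right two_ne_zero])
  have hseg : v ∈ openSegment ℝ (-v) (v + v) :=
    ⟨1 / 3, 2 / 3, by norm_num, by norm_num, by norm_num, by module⟩
  exact self_ne_neg.2 hv0 ((mem_extremePoints_iff_left.1 hv).2 _ hnegK _ hdblK hseg).symm

lemma zero_notMem_interior_of_mem_extremePoints
    (hv : v ∈ extremePoints ℝ (kleinPolyhedron C)) :
    (0 : Vec n) ∉ interior (C : Set (Vec n)) := by
  intro h0
  have hlim : Filter.Tendsto (fun l : ℝ => l • -v) (𝓝[>] 0) (𝓝 0) := by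
    have : Filter.Tendsto (fun l : ℝ => l • -v) (𝓝 0) (𝓝 ((0 : ℝ) • -v)) :=
      Filter.tendsto_id.smul_const _
    rw [zero_smul] at this
    exact this.mono_left nhdsWithin_le_nhds
  obtain ⟨l, hlC, hl⟩ := ((hlim.eventually (mem_interior_iff_mem_nhds.1 h0)).and
    eventually_mem_nhdsWithin).exists
  have := C.smul_mem (inv_nonneg.2 (le_of_lt hl)) hlC
  rw [inv_smul_smul₀ (ne_of_gt hl)] at this
  exact neg_notMem_of_mem_extremePoints hv this

lemma add_mem_kleinPolyhedron (hv : v ∈ extremePoints ℝ (kleinPolyhedron C))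
    {u : Vec n} (hu : u ∈ intLattice n) (huC : v + u ∈ interior (C : Set (Vec n))) :
    v + u ∈ kleinPolyhedron C := by
  refine mem_kleinPolyhedron (interior_subset huC)
    ((intLattice n).add_mem (mem_intLattice_of_mem_extremePoints hv) hu) ?_
  intro h
  exact zero_notMem_interior_of_mem_extremePoints hv (h ▸ huC)

lemma closure_subset_feasibleCone (hv : v ∈ extremePoints ℝ (kleinPolyhedron C))
    (hvC : v ∈ interior (C : Set (Vec n))) :
    closure (C : Set (Vec n)) ⊆ feasibleCone (kleinPolyhedron C) v := by
  intro ω hω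
  obtain ⟨δ, hδ, hball⟩ := Metric.isOpen_iff.1 isOpen_interior v hvC
  refine Submodule.span_le.2 ?_ (mem_hull_pointsNearRay (L := intLattice n) hδ
    fun ε hε R => exists_mem_intLattice_norm_sub_smul_lt ω hε R)
  rintro u ⟨huL, t, ht, hut⟩
  have hnear : v + (u - t • ω) ∈ interior (C : Set (Vec n)) := hball (by simpa using hut)
  have htω : t • ω ∈ closure (C : Set (Vec n)) := C.closure.smul_mem ht hω
  have := add_mem_interior_of_mem_closure (P := C.toAddSubmonoid) hnear htω
  rw [add_assoc, sub_add_cancel] at this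
  exact mem_feasibleCone_of_add_mem (add_mem_kleinPolyhedron hv huL this)

end KleinPolyhedron

section Directions

variable {E : Type*} [NormedAddCommGroup E] [NormedSpace ℝ E]

/-- The unit vectors in `closure C` together with the unit vectors pointing from `v` to points of
`S`. When `S` is a discrete subset of the cone `C`, the latter accumulate only at the former, and
the set is a compact set of generators for the feasible directions at `v`. -/
def directionSet (C S : Set E) (v : E) : Set E :=
  Metric.sphere 0 1 ∩ (closure C ∪ range fun x : S => ‖(x : E) - v‖⁻¹ • ((x : E) - v))

lemma zero_notMem_directionSet (C S : Set E) (v : E) : 0 ∉ directionSet C S v := by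
  rintro ⟨h, -⟩
  simp at h

lemma isCompact_directionSet [ProperSpace E] {C : PointedCone ℝ E} {S : Set E} {v : E}
    (hSC : S ⊆ C) (hS : ∀ R : ℝ, (Metric.closedBall v R ∩ S).Finite) :
    IsCompact (directionSet (C : Set E) S v) := by
  refine (isCompact_sphere 0 1).inter_right
    (isClosed_union_range_of_finite_notMem_thickening isClosed_closure fun ε hε => ?_)
  refine ((hS (‖v‖ / ε)).preimage Subtype.val_injective.injOn).subset fun x hx => ?_
  refine ⟨?_, x.2⟩
  by_contra hfar
  rw [Metric.mem_closedBall, dist_eq_norm, not_le] at hfar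
  have hpos : 0 < ‖(x : E) - v‖ := hfar.trans_le' (by positivity)
  refine hx (Metric.mem_thickening_iff.2
    ⟨‖(x : E) - v‖⁻¹ • (x : E), subset_closure (C.smul_mem (by positivity) (hSC x.2)), ?_⟩)
  rw [dist_eq_norm, ← smul_sub, sub_sub_cancel_left, norm_smul, norm_neg, norm_inv, norm_norm,
    inv_mul_lt_iff₀ hpos]
  rwa [div_lt_iff₀ hε] at hfar

lemma hull_directionSet {C S : Set E} {v : E}
    (hC : closure C ⊆ (PointedCone.hull ℝ ((· - v) '' S) : Set E)) :
    PointedCone.hull ℝ (directionSet C S v) = PointedCone.hull ℝ ((· - v) '' S) := by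
  refine le_antisymm (Submodule.span_le.2 ?_) (Submodule.span_le.2 ?_)
  · rintro _ ⟨-, hx | ⟨x, rfl⟩⟩
    · exact hC hx
    · exact PointedCone.smul_mem _ (by positivity)
        (PointedCone.subset_hull (mem_image_of_mem (· - v) x.2))
  · rintro _ ⟨x, hx, rfl⟩
    rcases eq_or_ne (x - v) 0 with h0 | h0
    · simp [h0]
    · have hmem : ‖x - v‖⁻¹ • (x - v) ∈ directionSet C S v :=
        ⟨by simp [norm_smul, h0], .inr ⟨⟨x, hx⟩, rfl⟩⟩
      have := PointedCone.smul_mem _ (norm_nonneg (x - v)) (PointedCone.subset_hull (R := ℝ) hmem)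
      rwa [smul_inv_smul₀ (norm_ne_zero_iff.2 h0)] at this

end Directions

section Edges

variable {n m : ℕ} {v : Vec n} {E : Fin m → Set (Vec n)} {r : Fin m → Fin n → ℤ}

lemma HasEdgeData.exists_mem_hull_singleton {K : Set (Vec n)} (hE : HasEdgeData K v E r)
    (hK : Convex ℝ K) (hv : v ∈ K) {b : Vec n} (hb0 : b ≠ 0)
    (hb : (PointedCone.hull ℝ {b}).IsFaceOf (feasibleCone K v)) :
    ∃ x ∈ range fun j => (intCast (r j) : Vec n), b ∈ PointedCone.hull ℝ {x} := by
  have hbb : b ∈ PointedCone.hull ℝ {b} := PointedCone.subset_hull rfl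
  set e : Set (Vec n) := {y | y ∈ K ∧ y - v ∈ PointedCone.hull ℝ {b}}
  have hve : v ∈ e := ⟨hv, by simp⟩
  have hcone : feasibleCone e v = PointedCone.hull ℝ {b} :=
    feasibleCone_setOf_sub_mem hK hv hb.le
  have hedge : IsFaceDim K e 1 := by
    refine ⟨isExtreme_setOf_sub_mem hb,
      hK.inter (convex_preimage_sub_const (PointedCone.convex _) v), ?_⟩
    rw [direction_affineSpan_eq_span_feasibleCone hve, hcone, span_hull]
    exact finrank_span_singleton hb0
  obtain ⟨j, hj⟩ := hE.2.2 e hedge hve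
  obtain ⟨l, hl, hlpos⟩ := ((eventually_add_smul_mem hK hv (hb.le hbb)).and
    eventually_mem_nhdsWithin).exists
  have hle : v + l • b ∈ E j := hj ▸ ⟨hl, by
    rw [add_sub_cancel_left]; exact PointedCone.smul_mem _ (le_of_lt hlpos) hbb⟩
  obtain ⟨t, ht, htr⟩ := (hE.2.1 j).2.2.2 hle
  have htb : t • intCast (r j) = l • b := (add_left_cancel htr).symm
  refine ⟨_, ⟨j, rfl⟩, mem_hull_singleton_iff.2 ⟨l⁻¹ * t, ?_, ?_⟩⟩
  · exact mul_nonneg (inv_nonneg.2 (le_of_lt hlpos)) ht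
  · rw [mul_smul, htb, inv_smul_smul₀ (ne_of_gt hlpos)]

variable {C : PointedCone ℝ (Vec n)}

lemma HasEdgeData.feasibleCone_le_hull (hE : HasEdgeData (kleinPolyhedron C) v E r)
    (hv : v ∈ extremePoints ℝ (kleinPolyhedron C)) (hvC : v ∈ interior (C : Set (Vec n))) :
    feasibleCone (kleinPolyhedron C) v ≤
      PointedCone.hull ℝ (range fun j => (intCast (r j) : Vec n)) := by
  have hcone : feasibleCone (kleinPolyhedron C) v =
      PointedCone.hull ℝ (directionSet (C : Set (Vec n)) {x | x ∈ C ∧ IsIntVec x ∧ x ≠ 0} v) := by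
    have hclosure := closure_subset_feasibleCone hv hvC
    rw [kleinPolyhedron, feasibleCone_convexHull] at hclosure ⊢
    exact (hull_directionSet hclosure).symm
  rw [hcone]
  refine hull_le_hull_of_forall_extremeRay (isCompact_directionSet (fun x hx => hx.1) fun R =>
    (finite_inter_intLattice Metric.isBounded_closedBall).subset
      (inter_subset_inter_right _ fun x hx => hx.2.1)) (zero_notMem_directionSet _ _ _) ?_
      (finite_range _) ?_
  · exact hcone ▸ salient_feasibleCone (convex_kleinPolyhedron _) hv
  · exact fun b hb0 hb =>
      hE.exists_mem_hull_singleton (convex_kleinPolyhedron _) hv.1 hb0 (hcone ▸ hb)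

lemma HasEdgeData.exists_add_smul_mem {S : Set (Vec n)} (hE : HasEdgeData (convexHull ℝ S) v E r)
    (j : Fin m) : ∃ t : ℝ, 0 < t ∧ v + t • intCast (r j) ∈ S := by
  obtain ⟨⟨hext, hconv, hdim⟩, hvE, -, hray⟩ := hE.2.1 j
  have hle : feasibleCone (E j) v ≤ PointedCone.hull ℝ {intCast (r j)} := by
    refine Submodule.span_le.2 (image_subset_iff.2 fun x hx => ?_)
    obtain ⟨t, ht, rfl⟩ := hray hx
    exact mem_hull_singleton_iff.2 ⟨t, ht, (add_sub_cancel_left _ _).symm⟩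
  have hface := isFaceOf_feasibleCone (convex_convexHull ℝ S) hext hconv hvE
  rw [feasibleCone_convexHull] at hface
  by_contra! hnone
  have hzero : (· - v) '' S ∩ feasibleCone (E j) v ⊆ {0} := by
    rintro _ ⟨⟨x, hxS, rfl⟩, hx⟩
    obtain ⟨t, ht, htx⟩ := mem_hull_singleton_iff.1 (hle hx)
    obtain rfl | ht := ht.eq_or_lt
    · simpa using htx.symm
    · exact absurd (show v + t • intCast (r j) ∈ S by rwa [htx, add_sub_cancel]) (hnone t ht)
  have hbot : feasibleCone (E j) v ≤ ⊥ :=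
    (le_hull_inter_of_isFaceOf hface).trans
      ((Submodule.span_mono hzero).trans (Submodule.span_zero_singleton _).le)
  rw [direction_affineSpan_eq_span_feasibleCone hvE, le_bot_iff.1 hbot, Submodule.bot_coe,
    Submodule.span_zero_singleton, finrank_bot] at hdim
  exact zero_ne_one hdim

lemma HasEdgeData.add_intCast_mem (hE : HasEdgeData (kleinPolyhedron C) v E r)
    (hv : v ∈ extremePoints ℝ (kleinPolyhedron C)) (j : Fin m) :
    v + intCast (r j) ∈ kleinPolyhedron C := by
  obtain ⟨t, ht, hS⟩ := hE.exists_add_smul_mem j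
  obtain ⟨k, rfl⟩ := (hE.2.1 j).2.2.1.exists_int_cast_eq (t := t) (by
    simpa using (intLattice n).sub_mem hS.2.1 (mem_intLattice_of_mem_extremePoints hv))
  have hk : (1 : ℝ) ≤ k := by exact_mod_cast Int.cast_pos.1 ht
  have := (convex_kleinPolyhedron (C : Set (Vec n))).add_smul_mem hv.1
    (subset_convexHull ℝ _ hS) (t := (k : ℝ)⁻¹) ⟨inv_nonneg.2 ht.le, inv_le_one_of_one_le₀ hk⟩
  rwa [inv_smul_smul₀ ht.ne'] at this

lemma HasEdgeData.feasibleCone_eq_hull (hE : HasEdgeData (kleinPolyhedron C) v E r)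
    (hv : v ∈ extremePoints ℝ (kleinPolyhedron C)) (hvC : v ∈ interior (C : Set (Vec n))) :
    feasibleCone (kleinPolyhedron C) v =
      PointedCone.hull ℝ (range fun j => (intCast (r j) : Vec n)) := by
  refine (hE.feasibleCone_le_hull hv hvC).antisymm (Submodule.span_le.2 ?_)
  rintro _ ⟨j, rfl⟩
  exact mem_feasibleCone_of_add_mem (hE.add_intCast_mem hv j)

end Edges

section VertexCoefficients

variable {ι : Type*} [Fintype ι]

lemma sub_sum_floor_smul_mem {E : Type*} [AddCommGroup E] [Module ℝ E] {C : PointedCone ℝ E}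
    {v : E} {f : ι → E} (hv : v ∈ C) (hf : ∀ i, v + f i ∈ C) {c : ι → ℝ}
    (hvc : ∑ i, c i • f i = v) {s : ℝ} (hs : ∑ i, Int.fract (s * c i) ≤ 1 - s) :
    v - ∑ i, (⌊s * c i⌋ : ℝ) • f i ∈ C := by
  have hdecomp : v - ∑ i, (⌊s * c i⌋ : ℝ) • f i =
      (1 - s - ∑ i, Int.fract (s * c i)) • v + ∑ i, Int.fract (s * c i) • (v + f i) := by
    have hfract : ∑ i, Int.fract (s * c i) • f i = s • v - ∑ i, (⌊s * c i⌋ : ℝ) • f i := by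
      simp only [← Int.self_sub_floor, sub_smul, mul_smul, Finset.sum_sub_distrib,
        ← Finset.smul_sum, hvc]
    simp only [smul_add, Finset.sum_add_distrib, hfract, ← Finset.sum_smul]
    module
  rw [hdecomp]
  exact C.add_mem (C.smul_mem (sub_nonneg.2 hs) hv)
    (sum_mem fun i _ => C.smul_mem (Int.fract_nonneg _) (hf i))

lemma sum_floor_smul_ne {E : Type*} [AddCommGroup E] [Module ℝ E] {f : ι → E}
    (hf : LinearIndependent ℝ f) {c : ι → ℝ} {s : ℝ} (hs : s < 1) {i : ι} (hi : 1 ≤ s * c i) :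
    ∑ j, (⌊s * c j⌋ : ℝ) • f j ≠ 0 ∧ ∑ j, (⌊s * c j⌋ : ℝ) • f j ≠ ∑ j, c j • f j := by
  have hinj := hf.fintypeLinearCombination_injective
  have hfloor : (1 : ℝ) ≤ ⌊s * c i⌋ := by exact_mod_cast Int.le_floor.2 (by exact_mod_cast hi)
  refine ⟨fun h => ?_, fun h => ?_⟩
  · have h0 : (⌊s * c i⌋ : ℝ) = 0 := congrFun (hinj (a₁ := fun j => (⌊s * c j⌋ : ℝ)) (a₂ := 0) (by
      simpa [Fintype.linearCombination_apply] using h)) i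
    linarith
  · have hci : (⌊s * c i⌋ : ℝ) = c i := congrFun (hinj (a₁ := fun j => (⌊s * c j⌋ : ℝ)) (by
      simpa [Fintype.linearCombination_apply] using h)) i
    nlinarith [Int.floor_le (s * c i)]

variable {n : ℕ} {C : PointedCone ℝ (Vec n)} {v : Vec n}

lemma coeff_lt_of_sum_smul_eq (hv : v ∈ extremePoints ℝ (kleinPolyhedron C)) {f : ι → Vec n}
    (hf : LinearIndependent ℝ f) (hfL : ∀ i, f i ∈ intLattice n)
    (hfK : ∀ i, v + f i ∈ kleinPolyhedron C) {c : ι → ℝ} (hc : ∀ i, 0 ≤ c i)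
    (hvc : ∑ i, c i • f i = v) (i : ι) : c i < (4 * n : ℝ) ^ (2 * n.factorial - 1) := by
  by_contra! hi
  have : Nonempty ι := ⟨i⟩
  obtain ⟨i₀, hmax⟩ := Finite.exists_max c
  have hcard : Fintype.card ι ≤ n := by simpa using hf.fintype_card_le_finrank
  obtain ⟨s, hs0, hs1, hsc, hfract⟩ := exists_scale_sum_fract_le hcard hc hmax (hi.trans (hmax i))
  obtain ⟨hu0, huv⟩ := sum_floor_smul_ne hf hs1 hsc
  rw [hvc] at huv
  set u := ∑ i, (⌊s * c i⌋ : ℝ) • f i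
  have huL : u ∈ intLattice n := sum_mem fun i _ => by
    rw [Int.cast_smul_eq_zsmul]
    exact (intLattice n).zsmul_mem (hfL i) _
  have hneg : -u ∈ feasibleCone (kleinPolyhedron C) v := by
    refine mem_feasibleCone_of_add_mem (mem_kleinPolyhedron ?_ ?_ ?_)
    · rw [← sub_eq_add_neg]
      exact sub_sum_floor_smul_mem (kleinPolyhedron_subset C hv.1)
        (fun i => kleinPolyhedron_subset C (hfK i)) hvc hfract
    · exact (intLattice n).add_mem (mem_intLattice_of_mem_extremePoints hv)
        ((intLattice n).neg_mem huL)
    · rwa [← sub_eq_add_neg, sub_ne_zero, ne_comm]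
  have hpos : u ∈ feasibleCone (kleinPolyhedron C) v := sum_mem fun i _ =>
    PointedCone.smul_mem _ (Int.cast_nonneg (Int.floor_nonneg.2 (mul_nonneg hs0.le (hc i))))
      (mem_feasibleCone_of_add_mem (hfK i))
  exact salient_feasibleCone (convex_kleinPolyhedron _) hv u hpos hu0 hneg

variable {m : ℕ} {E : Fin m → Set (Vec n)} {r : Fin m → Fin n → ℤ}

lemma HasEdgeData.exists_sum_smul_eq_vertex (hE : HasEdgeData (kleinPolyhedron C) v E r)
    (hv : v ∈ extremePoints ℝ (kleinPolyhedron C)) (hvC : v ∈ interior (C : Set (Vec n))) :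
    ∃ t : Finset (Vec n), (t : Set (Vec n)) ⊆ range (fun j => intCast (r j)) ∧ t.card ≤ n ∧
      ∃ c : Vec n → ℝ, (∀ a ∈ t, 0 ≤ c a ∧ c a < (4 * n : ℝ) ^ (2 * n.factorial - 1)) ∧
        ∑ a ∈ t, c a • a = v := by
  have hmem := hE.feasibleCone_le_hull hv hvC
    (closure_subset_feasibleCone hv hvC (subset_closure (interior_subset hvC)))
  obtain ⟨t, htr, hind, hvt⟩ := exists_linearIndepOn_of_mem_hull hmem
  obtain ⟨c, hc, hvc⟩ := mem_hull_finset_iff.1 hvt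
  refine ⟨t, htr, by simpa using LinearIndependent.fintype_card_le_finrank hind, c,
    fun a ha => ⟨hc a ha, ?_⟩, hvc⟩
  refine coeff_lt_of_sum_smul_eq hv (f := fun a : t => a) (c := fun a => c a) hind ?_ ?_
    (fun a => hc a a.2) ((t.sum_coe_sort fun a => c a • a).trans hvc) ⟨a, ha⟩
  · intro a
    obtain ⟨j, hj⟩ := htr a.2
    exact hj ▸ intCast_mem_intLattice (r j)
  · intro a
    obtain ⟨j, hj⟩ := htr a.2
    exact hj ▸ hE.add_intCast_mem hv j

lemma HasEdgeData.abs_map_vertex_le (hE : HasEdgeData (kleinPolyhedron C) v E r)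
    (hv : v ∈ extremePoints ℝ (kleinPolyhedron C)) (hvC : v ∈ interior (C : Set (Vec n)))
    (φ : Vec n →ₗ[ℝ] ℝ) {D : ℝ} (hD0 : 0 ≤ D) (hD : ∀ j, |φ (intCast (r j))| ≤ D) :
    |φ v| ≤ n * (4 * n : ℝ) ^ (2 * n.factorial - 1) * D := by
  obtain ⟨t, htr, hcard, c, hc, hvc⟩ := hE.exists_sum_smul_eq_vertex hv hvC
  have hterm (a : Vec n) (ha : a ∈ t) :
      |φ (c a • a)| ≤ (4 * n : ℝ) ^ (2 * n.factorial - 1) * D := by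
    obtain ⟨j, rfl⟩ := htr ha
    rw [map_smul, smul_eq_mul, abs_mul, abs_of_nonneg (hc _ ha).1]
    gcongr
    exacts [(hc _ ha).2.le, hD j]
  calc |φ v| ≤ ∑ a ∈ t, |φ (c a • a)| := by
        rw [← hvc, map_sum]
        exact Finset.abs_sum_le_sum_abs _ _
    _ ≤ t.card * ((4 * n : ℝ) ^ (2 * n.factorial - 1) * D) := by
        simpa using Finset.sum_le_card_nsmul t _ _ hterm
    _ ≤ n * (4 * n : ℝ) ^ (2 * n.factorial - 1) * D := by
        rw [mul_assoc]
        gcongr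

end VertexCoefficients

lemma index_closure_dvd_natAbs {G : Type*} [AddCommGroup G] (a : G →+ ℤ) {s : Set G} {v : G}
    (hv : v ∈ s) (hs : ∀ y, a y = a v → y ∈ s) :
    (AddSubgroup.closure s).index ∣ (a v).natAbs := by
  have hle : (AddSubgroup.zmultiples (a v)).comap a ≤ AddSubgroup.closure s := by
    intro y hy
    obtain ⟨t, ht⟩ := AddSubgroup.mem_zmultiples_iff.1 hy
    have hlevel : y - t • v + v ∈ s := hs _ (by rw [map_add, map_sub, map_zsmul, ht]; abel)
    have hy' : y = (y - t • v + v) + (t - 1) • v := by module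
    rw [hy']
    exact add_mem (AddSubgroup.subset_closure hlevel)
      (zsmul_mem (AddSubgroup.subset_closure hv) _)
  calc (AddSubgroup.closure s).index ∣ ((AddSubgroup.zmultiples (a v)).comap a).index :=
        AddSubgroup.index_dvd_of_le hle
    _ ∣ (AddSubgroup.zmultiples (a v)).index := by
        rw [AddSubgroup.index_comap]
        exact AddSubgroup.relIndex_dvd_index_of_normal _ _
    _ = (a v).natAbs := Int.index_zmultiples _

section Determinants

variable {k : ℕ}

/-- The determinant of the matrix with rows `y, R 0, …, R (k - 1)`, as a linear form in `y`. It
cuts out the hyperplane spanned by the `R i`, and bounds integer distances to its translates. -/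
def detCons {A : Type*} [CommRing A] (R : Fin k → Fin (k + 1) → A) : (Fin (k + 1) → A) →ₗ[A] A :=
  (Matrix.detRowAlternating (n := Fin (k + 1)) (R := A)).toMultilinearMap.toLinearMap
    (Fin.cons 0 R) 0

lemma detCons_apply {A : Type*} [CommRing A] (R : Fin k → Fin (k + 1) → A) (y : Fin (k + 1) → A) :
    detCons R y = (Matrix.of (Fin.cons y R : Fin (k + 1) → Fin (k + 1) → A)).det := by
  rw [detCons, MultilinearMap.toLinearMap_apply, Fin.update_cons_zero]
  rfl

lemma detCons_eq_zero_iff {K : Type*} [Field K] {R : Fin k → Fin (k + 1) → K}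
    (hR : LinearIndependent K R) {x : Fin (k + 1) → K} :
    detCons R x = 0 ↔ x ∈ Submodule.span K (range R) := by
  rw [← not_iff_not, ← ne_eq, ← isUnit_iff_ne_zero, detCons_apply,
    ← Matrix.isUnit_iff_isUnit_det, ← Matrix.linearIndependent_rows_iff_isUnit]
  exact linearIndependent_finCons.trans (and_iff_right hR)

lemma detCons_intCast (R : Fin k → Fin (k + 1) → ℤ) (y : Fin (k + 1) → ℤ) :
    detCons (fun i => intCast (R i)) (intCast y) = (detCons R y : ℝ) := by
  rw [detCons_apply, detCons_apply, Int.cast_det]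
  congr 1
  ext i j
  cases i using Fin.cases <;> rfl

variable {n m : ℕ}

lemma starDet_nonneg (r : Fin m → Fin n → ℤ) : 0 ≤ starDet r :=
  Finset.sum_nonneg fun _ _ => abs_nonneg _

lemma abs_det_comp_le_starDet (r : Fin m → Fin n → ℤ) (h : Fin n → Fin m) :
    |(Matrix.of (r ∘ h)).det| ≤ starDet r := by
  classical
  by_cases hinj : Injective h
  · have hmono : StrictMono (h ∘ Tuple.sort h) :=
      (Tuple.monotone_sort h).strictMono_of_injective (hinj.comp (Tuple.sort h).injective)
    have hperm : |(Matrix.of (r ∘ h ∘ Tuple.sort h)).det| = |(Matrix.of (r ∘ h)).det| :=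
      Matrix.abs_det_submatrix_equiv_equiv (Tuple.sort h) (Equiv.refl _) (Matrix.of (r ∘ h))
    rw [← hperm]
    exact Finset.single_le_sum
      (f := fun g : Fin n → Fin m => |(Matrix.of fun i j => r (g i) j).det|)
      (fun _ _ => abs_nonneg _) (Finset.mem_filter.2 ⟨Finset.mem_univ _, hmono⟩)
  · obtain ⟨a, b, hab, hne⟩ := not_injective_iff.1 hinj
    rw [Matrix.det_zero_of_row_eq hne (congrArg r hab), abs_zero]
    exact starDet_nonneg r

lemma abs_detCons_comp_le_starDet (r : Fin m → Fin (k + 1) → ℤ) (ρ : Fin k → Fin m) (j : Fin m) :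
    |detCons (r ∘ ρ) (r j)| ≤ starDet r := by
  have hcons : (Fin.cons (r j) (r ∘ ρ) : Fin (k + 1) → Fin (k + 1) → ℤ) =
      r ∘ (Fin.cons j ρ : Fin (k + 1) → Fin m) := by
    ext i : 1
    cases i using Fin.cases <;> rfl
  rw [detCons_apply, hcons]
  exact abs_det_comp_le_starDet r _

end Determinants

section FaceDirection

lemma exists_linearIndependent_span_eq_direction {V : Type*} [AddCommGroup V] [Module ℝ V]
    [FiniteDimensional ℝ V] {K F s : Set V} {v : V} (hK : Convex ℝ K)
    (hs : feasibleCone K v = PointedCone.hull ℝ s) (hF : IsExtreme ℝ K F) (hFc : Convex ℝ F)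
    (hv : v ∈ F) {d : ℕ} (hd : Module.finrank ℝ (affineSpan ℝ F).direction = d) :
    ∃ f : Fin d → V, (∀ i, f i ∈ s) ∧ LinearIndependent ℝ f ∧
      Submodule.span ℝ (range f) = (affineSpan ℝ F).direction := by
  subst hd
  have hface := isFaceOf_feasibleCone hK hF hFc hv
  rw [hs] at hface
  have hcone : PointedCone.hull ℝ (s ∩ feasibleCone F v) = feasibleCone F v :=
    (Submodule.span_le.2 inter_subset_right).antisymm (le_hull_inter_of_isFaceOf hface)
  have hspan : (affineSpan ℝ F).direction = Submodule.span ℝ (s ∩ feasibleCone F v) := by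
    rw [direction_affineSpan_eq_span_feasibleCone hv, ← span_hull (s ∩ _), hcone]
  rw [hspan]
  obtain ⟨f, hf, hfspan, hind⟩ :=
    Submodule.exists_fun_fin_finrank_span_eq ℝ (s ∩ feasibleCone F v)
  exact ⟨f, fun i => (hf i).1, hind, hfspan⟩

variable {n : ℕ} {C : PointedCone ℝ (Vec n)} {v : Vec n} {F : Set (Vec n)}

lemma notMem_direction_of_isFaceDim (hv : v ∈ extremePoints ℝ (kleinPolyhedron C))
    (hvC : v ∈ interior (C : Set (Vec n))) {d : ℕ} (hd : d < n)
    (hF : IsFaceDim (kleinPolyhedron C) F d) (hvF : v ∈ F) :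
    v ∉ (affineSpan ℝ F).direction := by
  rw [direction_affineSpan_eq_span_feasibleCone hvF]
  intro hmem
  have hsub : (C : Set (Vec n)) ⊆ feasibleCone (kleinPolyhedron C) v :=
    subset_closure.trans (closure_subset_feasibleCone hv hvC)
  have htop := span_eq_top_of_isFaceOf_of_mem_interior
    (isFaceOf_feasibleCone (convex_kleinPolyhedron _) hF.1 hF.2.1 hvF)
    (interior_mono hsub hvC) hmem
  have hdim := hF.2.2
  rw [direction_affineSpan_eq_span_feasibleCone hvF, htop, finrank_top, Module.finrank_fin_fun]
    at hdim
  exact hd.ne' hdim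

end FaceDirection

lemma index_closure_intCast_mem_dvd {k : ℕ} {R : Fin k → Fin (k + 1) → ℤ}
    (hR : LinearIndependent ℝ fun i => (intCast (R i) : Vec (k + 1)))
    {Q : AffineSubspace ℝ (Vec (k + 1))}
    (hQ : Submodule.span ℝ (range fun i => intCast (R i)) = Q.direction)
    {v : Fin (k + 1) → ℤ} (hv : intCast v ∈ Q) :
    (AddSubgroup.closure {y : Fin (k + 1) → ℤ | intCast y ∈ (Q : Set (Vec (k + 1)))}).index ∣
      (detCons R v).natAbs := by
  refine index_closure_dvd_natAbs (detCons R).toAddMonoidHom hv fun y hy => ?_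
  have hzero : detCons (fun i => intCast (R i)) (intCast y - intCast v) = (0 : ℝ) := by
    rw [map_sub, detCons_intCast, detCons_intCast, sub_eq_zero]
    exact congrArg _ hy
  rw [detCons_eq_zero_iff hR, hQ] at hzero
  exact (AffineSubspace.vsub_right_mem_direction_iff_mem hv _).1 hzero

lemma mul_four_mul_pow_mul_lt {n N : ℕ} (hn : 2 ≤ n) (hN : 0 < N) {D : ℤ} (hD : 0 < D) :
    n * (4 * n) ^ (2 * N - 1) * D < (n * D) ^ (8 * N) := by
  have hcube : (4 * n : ℤ) ≤ (n : ℤ) ^ 3 := by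
    calc (4 * n : ℤ) = 2 ^ 2 * n := by norm_num
      _ ≤ (n : ℤ) ^ 2 * n := by gcongr; exact_mod_cast hn
      _ = (n : ℤ) ^ 3 := (pow_succ _ 2).symm
  calc (n : ℤ) * (4 * n) ^ (2 * N - 1) * D ≤ (4 * n) * (4 * n) ^ (2 * N - 1) * D := by
        gcongr; linarith
    _ = (4 * n) ^ (2 * N) * D := by rw [mul_pow_sub_one (by omega)]
    _ ≤ ((n : ℤ) ^ 3) ^ (2 * N) * D := by gcongr
    _ < (n : ℤ) ^ (8 * N) * D := by
        rw [← pow_mul]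
        exact mul_lt_mul_of_pos_right (pow_lt_pow_right₀ (by exact_mod_cast hn) (by omega)) hD
    _ ≤ (n * D) ^ (8 * N) := by
        rw [mul_pow]
        gcongr
        exact le_self_pow₀ hD (by omega)

lemma HasEdgeData.abs_detCons_le {k m : ℕ} {C : PointedCone ℝ (Vec (k + 1))}
    {v : Fin (k + 1) → ℤ} {E : Fin m → Set (Vec (k + 1))} {r : Fin m → Fin (k + 1) → ℤ}
    (hE : HasEdgeData (kleinPolyhedron C) (intCast v) E r)
    (hv : intCast v ∈ extremePoints ℝ (kleinPolyhedron C))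
    (hvC : intCast v ∈ interior (C : Set (Vec (k + 1)))) (ρ : Fin k → Fin m) :
    |detCons (r ∘ ρ) v| ≤
      (k + 1 : ℕ) * (4 * (k + 1 : ℕ)) ^ (2 * (k + 1).factorial - 1) * starDet r := by
  have hD (j : Fin m) :
      |detCons (fun i => intCast ((r ∘ ρ) i)) (intCast (r j))| ≤ (starDet r : ℝ) := by
    rw [detCons_intCast]
    exact_mod_cast abs_detCons_comp_le_starDet r ρ j
  have := hE.abs_map_vertex_le hv hvC (detCons fun i => intCast ((r ∘ ρ) i))
    (by exact_mod_cast starDet_nonneg r) hD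
  rw [detCons_intCast] at this
  exact_mod_cast this

theorem statement7_general {n : ℕ} (hn : 2 ≤ n) {C : PointedCone ℝ (Vec n)} {v : Vec n}
    (hv : v ∈ extremePoints ℝ (kleinPolyhedron C)) (hvC : v ∈ interior (C : Set (Vec n)))
    {m : ℕ} {E : Fin m → Set (Vec n)} {r : Fin m → Fin n → ℤ}
    (hE : HasEdgeData (kleinPolyhedron C) v E r)
    {F : Set (Vec n)} (hF : IsFaceDim (kleinPolyhedron C) F (n - 1)) (hvF : v ∈ F) :
    (AddSubgroup.closure
        {y : Fin n → ℤ | intCast y ∈ (affineSpan ℝ F : Set (Vec n))}).index ≠ 0 ∧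
    ((AddSubgroup.closure
        {y : Fin n → ℤ | intCast y ∈ (affineSpan ℝ F : Set (Vec n))}).index : ℤ)
      < ((n : ℤ) * starDet r) ^ (8 * n.factorial) := by
  obtain ⟨k, rfl⟩ : ∃ k, n = k + 1 := ⟨n - 1, by omega⟩
  obtain ⟨v, rfl⟩ := exists_intCast_eq (mem_intLattice_of_mem_extremePoints hv)
  obtain ⟨f, hf, hind, hspan⟩ := exists_linearIndependent_span_eq_direction
    (convex_kleinPolyhedron _) (hE.feasibleCone_eq_hull hv hvC) hF.1 hF.2.1 hvF hF.2.2
  choose ρ hρ using hf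
  obtain rfl : (fun i => intCast ((r ∘ ρ) i)) = f := funext hρ
  have hdvd := index_closure_intCast_mem_dvd hind hspan (subset_affineSpan ℝ F hvF)
  have hdet : detCons (r ∘ ρ) v ≠ 0 := by
    have := notMem_direction_of_isFaceDim hv hvC k.lt_succ_self hF hvF
    rwa [← hspan, ← detCons_eq_zero_iff hind, detCons_intCast, Int.cast_eq_zero] at this
  have hle := hE.abs_detCons_le hv hvC ρ
  have hstar : 0 < starDet r := pos_of_mul_pos_right ((abs_pos.2 hdet).trans_le hle) (by positivity)
  refine ⟨fun h => hdet (Int.natAbs_eq_zero.1 (zero_dvd_iff.1 (h ▸ hdvd))), ?_⟩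
  exact (Int.le_of_dvd (abs_pos.2 hdet) ((Int.natCast_dvd.2 (by rwa [Int.natAbs_abs])))).trans_lt
    (hle.trans_lt (mul_four_mul_pow_mul_lt hn (Nat.factorial_pos _) hstar))

section IrrationalSimplicialCone

lemma mem_hull_range_iff {𝕜 E ι : Type*} [Field 𝕜] [LinearOrder 𝕜] [IsStrictOrderedRing 𝕜]
    [AddCommGroup E] [Module 𝕜 E] [Fintype ι] {ω : ι → E} {x : E} :
    x ∈ PointedCone.hull 𝕜 (range ω) ↔ ∃ t : ι → 𝕜, (∀ i, 0 ≤ t i) ∧ x = ∑ i, t i • ω i := by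
  constructor
  · intro hx
    obtain ⟨c, rfl⟩ := (Submodule.mem_span_range_iff_exists_fun _).1 hx
    exact ⟨fun i => c i, fun i => (c i).2, rfl⟩
  · rintro ⟨t, ht, rfl⟩
    exact sum_mem fun i _ => PointedCone.smul_mem _ (ht i)
      (PointedCone.subset_hull (mem_range_self i))

lemma mem_interior_hull_range_of_repr_pos {E ι : Type*} [NormedAddCommGroup E] [NormedSpace ℝ E]
    [Finite ι] (b : Module.Basis ι ℝ E) {x : E} (hx : ∀ i, 0 < b.repr x i) :
    x ∈ interior (PointedCone.hull ℝ (range b) : Set E) := by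
  have := b.finiteDimensional_of_finite
  have := Fintype.ofFinite ι
  have hopen : IsOpen {y | ∀ i, 0 < b.coord i y} := by
    simp only [ofPred_forall]
    exact isOpen_iInter_of_finite fun i =>
      isOpen_lt continuous_const (b.coord i).continuous_of_finiteDimensional
  refine interior_maximal (fun y hy => ?_) hopen hx
  exact mem_hull_range_iff.2 ⟨b.repr y, fun i => (hy i).le, (b.sum_repr y).symm⟩

lemma mem_interior_hull_range_of_irrational {n : ℕ} {ω : Fin n → Vec n}
    (hω : LinearIndependent ℝ ω)
    (hirr : ∀ i : Fin n, ∀ x ∈ Submodule.span ℝ (ω '' {j | j ≠ i}), IsIntVec x → x = 0)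
    {v : Vec n} (hv : v ∈ PointedCone.hull ℝ (range ω)) (hvL : v ∈ intLattice n) (hv0 : v ≠ 0) :
    v ∈ interior (PointedCone.hull ℝ (range ω) : Set (Vec n)) := by
  obtain ⟨t, ht, rfl⟩ := mem_hull_range_iff.1 hv
  set b := basisOfLinearIndependentOfCardEqFinrank' ω hω (by simp)
  have hbω : ⇑b = ω := coe_basisOfLinearIndependentOfCardEqFinrank' _ _ _
  have hpos (i : Fin n) : 0 < t i := by
    refine (ht i).lt_of_ne' fun h0 => hv0 (hirr i _ (sum_mem fun j _ => ?_) hvL)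
    rcases eq_or_ne j i with rfl | hj
    · rw [h0, zero_smul]
      exact zero_mem _
    · exact Submodule.smul_mem _ _ (Submodule.subset_span ⟨j, hj, rfl⟩)
  rw [← hbω]
  refine mem_interior_hull_range_of_repr_pos b fun i => ?_
  rw [b.repr_sum_self]
  exact hpos i

end IrrationalSimplicialCone

/-- Corollary 1: if `v` is a vertex of the sail of an irrational
simplicial cone contained in exactly `m` edges of the Klein polyhedron `K`, and `F` is an
`(n-1)`-dimensional face of `K` containing `v`, then the integer distance `ρ(F, 0)` is
finite and `ρ(F, 0) < (n · det oSt_v)^{8·n!}`. -/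
theorem statement7 (n : ℕ) (hn : 2 ≤ n)
    (ω : Fin n → Vec n) (hω : LinearIndependent ℝ ω)
    (C : Set (Vec n))
    (hC : C = {x | ∃ t : Fin n → ℝ, (∀ i, 0 ≤ t i) ∧ x = ∑ i, t i • ω i})
    (hirr : ∀ i : Fin n, ∀ x ∈ Submodule.span ℝ (ω '' {j | j ≠ i}), IsIntVec x → x = 0)
    (K : Set (Vec n))
    (hK : K = convexHull ℝ {x | x ∈ C ∧ IsIntVec x ∧ x ≠ 0})
    (v : Vec n) (hv : v ∈ Set.extremePoints ℝ K)
    (m : ℕ) (E : Fin m → Set (Vec n)) (r : Fin m → (Fin n → ℤ))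
    (hE : HasEdgeData K v E r)
    (F : Set (Vec n)) (hF : IsFaceDim K F (n - 1)) (hvF : v ∈ F) :
    (AddSubgroup.closure
        {y : Fin n → ℤ | intCast y ∈ (affineSpan ℝ F : Set (Vec n))}).index ≠ 0 ∧
    ((AddSubgroup.closure
        {y : Fin n → ℤ | intCast y ∈ (affineSpan ℝ F : Set (Vec n))}).index : ℤ)
      < ((n : ℤ) * starDet r) ^ (8 * n.factorial) := by
  obtain rfl : C = PointedCone.hull ℝ (range ω) := hC.trans (ext fun x => mem_hull_range_iff.symm)
  subst hK
  obtain ⟨hvC, hvL, hv0⟩ := extremePoints_convexHull_subset hv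
  exact statement7_general hn hv (mem_interior_hull_range_of_irrational hω hirr hvC hvL hv0)
    hE hF hvF
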